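/- arXiv:2407.16980 — 3 statements merged into one kernel-verified Lean document; each statement's English description precedes it below -/
import Mathlib

section
/- For every p > 2 there exist constants N₀, c, C, all depending only on p, such that for every integer n > N₀ there exists a square-integrable martingale difference sequence {Y_i}_{i=1}^n (on some probability space, with some filtration) satisfying: V_n² = 1 almost surely; L_p ≤ C (log n)^{-1}; and c · L_p ≤ W_1(X_n, N) ≤ C · L_p, where N is a standard normal random variable. -/
open MeasureTheory ProbabilityTheory Real Filter

noncomputable section

/-- `E[|U|^q]^{1/q}`. -/
def rnorm {Ω : Type*} [MeasurableSpace Ω] (μ : Measure Ω) (q : ℝ) (U : Ω → ℝ) : ℝ :=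
  (∫ ω, |U ω| ^ q ∂μ) ^ (1 / q)

/-- Wasserstein distance of order `r` between two laws on `ℝ`, defined as the infimum of
`E[|U'-V'|^r]^{1/r}` over all couplings. -/
def wassersteinDist (r : ℝ) (μ ν : Measure ℝ) : ℝ :=
  sInf { d : ℝ | ∃ cpl : Measure (ℝ × ℝ), IsProbabilityMeasure cpl ∧
    cpl.map Prod.fst = μ ∧ cpl.map Prod.snd = ν ∧
    d = (∫ p, |p.1 - p.2| ^ r ∂cpl) ^ (1 / r) }

/-- The standard normal law on `ℝ`. -/
def stdGaussian : Measure ℝ := gaussianReal 0 1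

/-- `{Y_i}_{i=1}^n` is a square-integrable martingale difference sequence w.r.t. `F`. -/
structure IsMDS {Ω : Type*} [m0 : MeasurableSpace Ω] (μ : Measure Ω)
    (F : ℕ → MeasurableSpace Ω) (n : ℕ) (Y : ℕ → Ω → ℝ) : Prop where
  protected le : ∀ i, F i ≤ m0
  protected mono : Monotone F
  protected adapted : ∀ i, 1 ≤ i → i ≤ n → Measurable[F i] (Y i)
  protected memL2 : ∀ i, 1 ≤ i → i ≤ n → MemLp (Y i) 2 μ
  protected mdiff : ∀ i, 1 ≤ i → i ≤ n → μ[Y i | F (i - 1)] =ᵐ[μ] 0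

/-- An N-function. -/
def IsNFunction (φ : ℝ → ℝ) : Prop :=
  ConvexOn ℝ (Set.Ici 0) φ ∧ (∀ x, 0 ≤ x → 0 ≤ φ x) ∧
  Tendsto (fun x => φ x / x) (nhdsWithin 0 (Set.Ioi 0)) (nhds 0) ∧
  Tendsto (fun x => φ x / x) atTop atTop ∧
  (∀ x, 0 < x → 0 < φ x)

/-- `φ₁ ≼ φ₂` : the ratio `φ₂/φ₁` is non-decreasing on `(0,∞)`. -/
def Dominates (φ₁ φ₂ : ℝ → ℝ) : Prop :=
  MonotoneOn (fun x => φ₂ x / φ₁ x) (Set.Ioi (0 : ℝ))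

/-- Generalized inverse of `φ` on `[0,∞)`. -/
def ninv (φ : ℝ → ℝ) (y : ℝ) : ℝ := sInf {x : ℝ | 0 ≤ x ∧ y ≤ φ x}

/-- Orlicz norm of the finite sequence `{Y_i}_{i=1}^n`. -/
def orliczSeqNorm {Ω : Type*} [MeasurableSpace Ω] (μ : Measure Ω) (φ : ℝ → ℝ)
    (n : ℕ) (Y : ℕ → Ω → ℝ) : ℝ :=
  sInf {c : ℝ | 0 < c ∧ (1 / n : ℝ) * ∑ i ∈ Finset.Icc 1 n, ∫ ω, φ (|Y i ω| / c) ∂μ ≤ 1}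


open scoped ENNReal

/-- Zolotarev's ideal distance of integer order `r`: the supremum of `E f(U) - E f(V)` over
`(r-1)`-times differentiable `f` whose `(r-1)`-st derivative is `1`-Lipschitz. -/
def zolotarev {Ω : Type*} [MeasurableSpace Ω] (r : ℕ) (μ : Measure Ω) (U : Ω → ℝ)
    (ν : Measure ℝ) : ℝ :=
  sSup { d : ℝ | ∃ f : ℝ → ℝ, ContDiff ℝ (r - 1 : ℕ) f ∧
    LipschitzWith 1 (iteratedDeriv (r - 1) f) ∧
    d = (∫ ω, f (U ω) ∂μ) - ∫ x, f x ∂ν }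

/-- The Fenchel–Legendre transform of `φ` (with the supremum over `y ≥ 0`). -/
def fenchel (φ : ℝ → ℝ) (x : ℝ) : ℝ := sSup ((fun y => x * y - φ y) '' Set.Ici 0)

/-- `C_φ = sup_{x,y>0} (φ⁻¹(x)φ_*⁻¹(x)/x) / (φ⁻¹(y)φ_*⁻¹(y)/y)`. -/
def nratioConst (φ : ℝ → ℝ) : ℝ :=
  sSup { r : ℝ | ∃ x > (0:ℝ), ∃ y > (0:ℝ),
    r = (ninv φ x * ninv (fenchel φ) x / x) / (ninv φ y * ninv (fenchel φ) y / y) }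

/-- `λ_m = ( Σ_{i=m+1}^n σ_i²(Y) + β² s_n² )^{1/2}`. -/
def lamCV {Ω : Type*} [MeasurableSpace Ω] (μ : Measure Ω) (F : ℕ → MeasurableSpace Ω)
    (n : ℕ) (Y : ℕ → Ω → ℝ) (sn β : ℝ) (m : ℕ) (ω : Ω) : ℝ :=
  Real.sqrt ((∑ j ∈ Finset.Icc (m + 1) n, (μ[fun ω' => Y j ω' ^ 2 | F (j - 1)]) ω)
    + β ^ 2 * sn ^ 2)

/-!
Let `S` be a sum of `n - 1` independent centred Gaussian steps of equal variance, and let the last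
step have standard deviation `δ = 1 / log n`: it is `δ U` with `U` standard Gaussian where
`cos (π S / δ) ≥ 0`, and `± δ` with random sign where `cos (π S / δ) < 0`. Every conditional
variance is constant, so `V_n² = 1`, and for large `n` the last step dominates the Lyapunov
coefficient, so that `L_p` is of order `δ`. A step `± δ` reverses the sign of `cos (π x / δ)`
exactly where it is negative, so the mean of this `π / δ`-Lipschitz function stays bounded away
from its nearly vanishing Gaussian mean; this gives `W₁ ≥ δ / 32`. Coupling the sum with the
Gaussian variable `S + δ U` gives `W₁ ≤ 2 δ`.
-/

section Wasserstein

lemma wassersteinDist_map_le (r : ℝ) {Ω : Type*} [MeasurableSpace Ω] {P : Measure Ω}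
    [IsProbabilityMeasure P] {X Z : Ω → ℝ} (hX : AEMeasurable X P) (hZ : AEMeasurable Z P) :
    wassersteinDist r (P.map X) (P.map Z) ≤ (∫ ω, |X ω - Z ω| ^ r ∂P) ^ (1 / r) := by
  have hXZ : AEMeasurable (fun ω => (X ω, Z ω)) P := hX.prodMk hZ
  refine csInf_le ⟨0, ?_⟩ ⟨P.map fun ω => (X ω, Z ω),
    Measure.isProbabilityMeasure_map hXZ, ?_, ?_, ?_⟩
  · rintro _ ⟨cpl, -, -, -, rfl⟩
    positivity
  · rw [AEMeasurable.map_map_of_aemeasurable measurable_fst.aemeasurable hXZ, Function.comp_def]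
  · rw [AEMeasurable.map_map_of_aemeasurable measurable_snd.aemeasurable hXZ, Function.comp_def]
  · rw [integral_map hXZ (Measurable.aestronglyMeasurable (by fun_prop))]

lemma integrable_comp_of_lipschitzWith {μ : Measure ℝ} [IsFiniteMeasure μ]
    (hμ : Integrable id μ) {K : NNReal} {f : ℝ → ℝ} (hf : LipschitzWith K f) :
    Integrable f μ := by
  refine Integrable.mono' ((integrable_const |f 0|).add (hμ.abs.const_mul (K : ℝ)))
    hf.continuous.aestronglyMeasurable (ae_of_all _ fun x => ?_)
  have hfx : |f x - f 0| ≤ K * |x| := by simpa [Real.dist_eq] using hf.dist_le_mul x 0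
  calc |f x| ≤ |f 0| + |f x - f 0| := by simpa using abs_add_le (f 0) (f x - f 0)
    _ ≤ |f 0| + K * |x| := by gcongr

-- The easy half of Kantorovich–Rubinstein duality.
lemma integral_sub_integral_le_mul_wassersteinDist_one {μ ν : Measure ℝ} [IsProbabilityMeasure μ]
    [IsProbabilityMeasure ν] (hμ : Integrable id μ) (hν : Integrable id ν) {K : NNReal}
    {f : ℝ → ℝ} (hf : LipschitzWith K f) :
    ∫ x, f x ∂μ - ∫ x, f x ∂ν ≤ K * wassersteinDist 1 μ ν := by
  rw [wassersteinDist, ← smul_eq_mul, ← Real.sInf_smul_of_nonneg K.coe_nonneg]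
  refine le_csInf (Set.Nonempty.smul_set
    ⟨_, μ.prod ν, inferInstance, by simp, by simp, rfl⟩) ?_
  rintro _ ⟨_, ⟨cpl, _, rfl, rfl, rfl⟩, rfl⟩
  have hfst : Integrable (fun q : ℝ × ℝ => f q.1) cpl :=
    (integrable_comp_of_lipschitzWith hμ hf).comp_measurable measurable_fst
  have hsnd : Integrable (fun q : ℝ × ℝ => f q.2) cpl :=
    (integrable_comp_of_lipschitzWith hν hf).comp_measurable measurable_snd
  have hsub : Integrable (fun q : ℝ × ℝ => q.1 - q.2) cpl :=
    (hμ.comp_measurable measurable_fst).sub (hν.comp_measurable measurable_snd)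
  rw [integral_map (by fun_prop) hf.continuous.aestronglyMeasurable,
    integral_map (by fun_prop) hf.continuous.aestronglyMeasurable, ← integral_sub hfst hsnd]
  simp only [Real.rpow_one, div_one, smul_eq_mul, ← integral_const_mul]
  exact integral_mono (hfst.sub hsnd) (hsub.abs.const_mul _) fun q =>
    (le_abs_self _).trans (by simpa [Real.dist_eq] using hf.dist_le_mul q.1 q.2)

end Wasserstein

section Freezing

variable {Ω E G : Type*} [MeasurableSpace G] [StandardBorelSpace G] [Nonempty G]

lemma condExp_comap_of_indepFun [mE : MeasurableSpace E] [MeasurableSpace Ω] {P : Measure Ω}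
    [IsFiniteMeasure P] {X : Ω → E} {U : Ω → G} (hX : Measurable X) (hU : Measurable U)
    (hXU : IndepFun X U P) {g : E × G → ℝ} (hg : Measurable g)
    (h_int : Integrable (fun ω => g (X ω, U ω)) P) :
    P[fun ω => g (X ω, U ω) | mE.comap X] =ᵐ[P] fun ω => ∫ w, g (X ω, w) ∂P.map U := by
  have hlaw : condDistrib U X P =ᵐ[P.map X] Kernel.const E (P.map U) := by
    refine condDistrib_ae_eq_of_measure_eq_compProd X hU.aemeasurable ?_
    rw [Measure.compProd_const]
    exact hXU.map_prod_eq_prod_map_map hX.aemeasurable hU.aemeasurable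
  filter_upwards [ae_of_ae_map hX.aemeasurable hlaw,
    condExp_prod_ae_eq_integral_condDistrib hX hU.aemeasurable hg.stronglyMeasurable h_int]
    with ω hω hcond
  rw [hcond, hω, Kernel.const_apply]

variable [MeasurableSpace E] {m m0 : MeasurableSpace Ω} {P : Measure Ω} [IsFiniteMeasure P]
  {X : Ω → E} {U : Ω → G}

lemma condExp_comp_of_indep (hm : m ≤ m0) (hX : Measurable[m] X) (hU : Measurable U)
    (hind : Indep m (MeasurableSpace.comap U inferInstance) P) {g : E × G → ℝ}
    (hg : Measurable g) (h_int : Integrable (fun ω => g (X ω, U ω)) P) :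
    P[fun ω => g (X ω, U ω) | m] =ᵐ[P] fun ω => ∫ w, g (X ω, w) ∂P.map U := by
  -- Regard `id` as a random element of `(Ω, m)`.
  have hg' : @Measurable _ _ (@Prod.instMeasurableSpace Ω G m _) _
      fun q : Ω × G => g (X q.1, q.2) :=
    hg.comp ((hX.comp (@measurable_fst Ω G m _)).prodMk (@measurable_snd Ω G m _))
  have hid : @IndepFun Ω Ω G m0 m _ id U P :=
    (@IndepFun_iff_Indep Ω Ω G m0 m _ id U P).2 (by rwa [MeasurableSpace.comap_id])
  simpa [MeasurableSpace.comap_id] using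
    condExp_comap_of_indepFun (mE := m) (X := id) (measurable_id'' hm) hU hid hg' h_int

end Freezing

section Moments

lemma integral_eq_zero_of_odd {G : Type*} [MeasurableSpace G] [AddGroup G]
    [MeasurableNeg G] {μ : Measure G} [μ.IsNegInvariant] {f : G → ℝ} (hf : f.Odd) :
    ∫ x, f x ∂μ = 0 := by
  have h : ∫ x, f x ∂μ = -∫ x, f x ∂μ := by
    rw [← integral_neg, ← integral_congr_ae (ae_of_all μ hf), integral_neg_eq_self]
  linarith

lemma rpow_integral_sq_le_integral_abs_rpow {Ω : Type*} [MeasurableSpace Ω] {P : Measure Ω}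
    [IsProbabilityMeasure P] {f : Ω → ℝ} {p : ℝ} (hp : 2 ≤ p) (hf : MemLp f (ENNReal.ofReal p) P) :
    (∫ ω, f ω ^ 2 ∂P) ^ (p / 2) ≤ ∫ ω, |f ω| ^ p ∂P := by
  have hp0 : 0 < p := by linarith
  have hpow : ∀ x : ℝ, (x ^ 2) ^ (p / 2) = |x| ^ p := fun x => by
    rw [← sq_abs, ← Real.rpow_natCast, ← Real.rpow_mul (abs_nonneg x)]
    congr 1; push_cast; ring
  have hf2 : MemLp f 2 P := hf.mono_exponent (by simpa using ENNReal.ofReal_le_ofReal hp)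
  have hfp : Integrable (fun ω => |f ω| ^ p) P := by
    simpa [ENNReal.toReal_ofReal hp0.le] using hf.integrable_norm_rpow'
  have hjensen := (convexOn_rpow (p := p / 2) (by linarith)).map_integral_le
    (continuousOn_id.rpow_const fun _ _ => Or.inr (by positivity)) isClosed_Ici
    (ae_of_all P fun ω => sq_nonneg (f ω)) hf2.integrable_sq
    (by simpa only [Function.comp_def, hpow] using hfp)
  simpa only [hpow] using hjensen

end Moments

section Gaussian

instance isNegInvariant_gaussianReal (v : NNReal) : (gaussianReal 0 v).IsNegInvariant :=
  ⟨by rw [Measure.neg]; exact gaussianReal_map_neg.trans (by simp)⟩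

lemma integral_sin_mul_gaussianReal (v : NNReal) (t : ℝ) :
    ∫ x, Real.sin (t * x) ∂gaussianReal 0 v = 0 :=
  integral_eq_zero_of_odd fun x => by rw [mul_neg, Real.sin_neg]

lemma integral_cos_mul_gaussianReal (v : NNReal) (t : ℝ) :
    ∫ x, Real.cos (t * x) ∂gaussianReal 0 v = Real.exp (-(v * t ^ 2 / 2)) := by
  have h_int : Integrable (fun x : ℝ => Complex.exp (t * x * Complex.I)) (gaussianReal 0 v) :=
    .of_bound (C := 1) (by fun_prop) (ae_of_all _ fun x => by
      simpa using (Complex.norm_exp_ofReal_mul_I (t * x)).le)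
  have hcos : ∀ x : ℝ, Real.cos (t * x) = RCLike.re (Complex.exp (t * x * Complex.I)) := fun x => by
    simpa using (Complex.exp_ofReal_mul_I_re (t * x)).symm
  have hexp : Complex.exp (t * (0 : ℝ) * Complex.I - v * t ^ 2 / 2)
      = (Real.exp (-(v * t ^ 2 / 2)) : ℝ) := by
    push_cast; congr 1; ring
  simp_rw [hcos]
  rw [integral_re h_int, ← charFun_apply_real, charFun_gaussianReal, hexp]
  exact Complex.ofReal_re _

lemma memLp_of_hasLaw_gaussianReal {Ω : Type*} [MeasurableSpace Ω] {P : Measure Ω} {X : Ω → ℝ}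
    {μ : ℝ} {v : NNReal} (hX : HasLaw X (gaussianReal μ v) P) {q : ENNReal} (hq : q ≠ ⊤) :
    MemLp X q P :=
  (memLp_map_measure_iff (g := id) (by fun_prop) hX.aemeasurable).1
    (hX.map_eq ▸ memLp_id_gaussianReal' q hq)

lemma hasLaw_add_const_mul_gaussianReal {Ω : Type*} [MeasurableSpace Ω] {P : Measure Ω}
    [IsProbabilityMeasure P] {X Y : Ω → ℝ} {v v' w : NNReal} {a : ℝ}
    (hX : HasLaw X (gaussianReal 0 v) P) (hY : HasLaw Y (gaussianReal 0 v') P)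
    (hXY : IndepFun X Y P) (hw : (w : ℝ) = v + a ^ 2 * v') :
    HasLaw (fun ω => X ω + a * Y ω) (gaussianReal 0 w) P := by
  have h := (hXY.comp measurable_id (measurable_const_mul a)).hasLaw_add hX
    (gaussianReal_const_mul hY a)
  have hvar : w = v + .mk (a ^ 2) (sq_nonneg a) * v' := NNReal.eq (by simpa using hw)
  rw [gaussianReal_conv_gaussianReal, mul_zero, add_zero, ← hvar] at h
  exact h

lemma integral_sq_gaussianReal (v : NNReal) : ∫ w, w ^ 2 ∂gaussianReal 0 v = v := by
  rw [← variance_fun_id_gaussianReal (μ := 0) (v := v),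
    variance_of_integral_eq_zero (by fun_prop) (by simp)]

lemma one_le_integral_abs_rpow_gaussianReal {p : ℝ} (hp : 2 ≤ p) :
    1 ≤ ∫ w, |w| ^ p ∂gaussianReal 0 1 := by
  simpa [integral_sq_gaussianReal] using rpow_integral_sq_le_integral_abs_rpow hp
    (memLp_id_gaussianReal' (μ := 0) (v := 1) (ENNReal.ofReal p) (by simp))

end Gaussian

section SignSwitch

lemma measurable_sign : Measurable Real.sign :=
  measurable_const.ite measurableSet_Iio (measurable_const.ite measurableSet_Ioi measurable_const)

lemma abs_sign {w : ℝ} (hw : w ≠ 0) : |Real.sign w| = 1 := by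
  rcases Real.sign_apply_eq_of_ne_zero w hw with h | h <;> simp [h]

lemma abs_sign_le_one (w : ℝ) : |Real.sign w| ≤ 1 := by
  rcases eq_or_ne w 0 with rfl | hw
  · simp
  · exact (abs_sign hw).le

lemma ae_abs_sign_gaussianReal {v : NNReal} (hv : v ≠ 0) :
    ∀ᵐ w ∂gaussianReal 0 v, |Real.sign w| = 1 := by
  have := nullSingletonClass_gaussianReal (μ := 0) hv
  filter_upwards [Measure.ae_ne (gaussianReal 0 v) 0] with w hw using abs_sign hw

/-- The innovation `w` itself, or only its sign when the control `c` is negative. For a standard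
Gaussian `w` both versions have mean `0` and variance `1`, so the control can alter the law
without altering the first two moments. -/
def signSwitch (c w : ℝ) : ℝ := if c < 0 then Real.sign w else w

lemma signSwitch_of_neg {c : ℝ} (hc : c < 0) (w : ℝ) : signSwitch c w = Real.sign w := if_pos hc

lemma signSwitch_of_nonneg {c : ℝ} (hc : 0 ≤ c) (w : ℝ) : signSwitch c w = w :=
  if_neg hc.not_gt

lemma measurable_signSwitch : Measurable fun q : ℝ × ℝ => signSwitch q.1 q.2 :=
  (measurable_sign.comp measurable_snd).ite (measurableSet_Iio.preimage measurable_fst)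
    measurable_snd

lemma abs_signSwitch_le (c w : ℝ) : |signSwitch c w| ≤ 1 + |w| := by
  rcases lt_or_ge c 0 with hc | hc
  · rw [signSwitch_of_neg hc]
    linarith [abs_sign_le_one w, abs_nonneg w]
  · rw [signSwitch_of_nonneg hc]
    linarith

lemma abs_signSwitch_sub_le (c w : ℝ) : |signSwitch c w - w| ≤ 1 + |w| := by
  rcases lt_or_ge c 0 with hc | hc
  · rw [signSwitch_of_neg hc]
    exact (abs_sub _ _).trans (by gcongr; exact abs_sign_le_one w)
  · rw [signSwitch_of_nonneg hc, sub_self, abs_zero]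
    positivity

lemma memLp_signSwitch {Ω : Type*} [MeasurableSpace Ω] {P : Measure Ω} [IsFiniteMeasure P]
    {C U : Ω → ℝ} {q : ENNReal} (hC : AEMeasurable C P) (hU : MemLp U q P) :
    MemLp (fun ω => signSwitch (C ω) (U ω)) q P :=
  ((memLp_const (1 : ℝ)).add hU.abs).mono
    (measurable_signSwitch.comp_aemeasurable (hC.prodMk hU.aemeasurable)).aestronglyMeasurable
    (ae_of_all _ fun _ => (abs_signSwitch_le _ _).trans (le_abs_self _))

lemma integral_signSwitch (c : ℝ) : ∫ w, signSwitch c w ∂gaussianReal 0 1 = 0 := by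
  rcases lt_or_ge c 0 with hc | hc
  · simp only [signSwitch_of_neg hc]
    exact integral_eq_zero_of_odd fun _ => Real.sign_neg
  · simp only [signSwitch_of_nonneg hc, integral_id_gaussianReal]

lemma integral_signSwitch_sq (c : ℝ) : ∫ w, signSwitch c w ^ 2 ∂gaussianReal 0 1 = 1 := by
  rcases lt_or_ge c 0 with hc | hc
  · have hsq : ∀ᵐ w ∂gaussianReal 0 1, signSwitch c w ^ 2 = 1 := by
      filter_upwards [ae_abs_sign_gaussianReal one_ne_zero] with w hw
      rw [signSwitch_of_neg hc, ← sq_abs, hw, one_pow]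
    simp [integral_congr_ae hsq]
  · simp [signSwitch_of_nonneg hc, integral_sq_gaussianReal]

lemma integral_abs_signSwitch_rpow_le (c : ℝ) {p : ℝ} (hp : 2 ≤ p) :
    ∫ w, |signSwitch c w| ^ p ∂gaussianReal 0 1 ≤ ∫ w, |w| ^ p ∂gaussianReal 0 1 := by
  rcases lt_or_ge c 0 with hc | hc
  · have hone : ∀ᵐ w ∂gaussianReal 0 1, |signSwitch c w| ^ p = 1 := by
      filter_upwards [ae_abs_sign_gaussianReal one_ne_zero] with w hw
      rw [signSwitch_of_neg hc, hw, Real.one_rpow]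
    simpa [integral_congr_ae hone] using one_le_integral_abs_rpow_gaussianReal hp
  · simp only [signSwitch_of_nonneg hc, le_refl]

end SignSwitch

section Innovations

/-- `u 0, u 1, …` are innovations of law `ν` for the filtration `F`: `u i` is revealed at time
`i + 1` and is independent of the past `F i`. -/
structure IsInnovation {Ω : Type*} {m0 : MeasurableSpace Ω} (P : Measure Ω)
    (F : Filtration ℕ m0) (ν : Measure ℝ) (u : ℕ → Ω → ℝ) : Prop where
  measurable_succ : ∀ i, Measurable[F (i + 1)] (u i)
  hasLaw : ∀ i, HasLaw (u i) ν P
  indep : ∀ i, Indep (F i) (MeasurableSpace.comap (u i) inferInstance) P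

lemma exists_isInnovation (ν : Measure ℝ) [IsProbabilityMeasure ν] :
    ∃ (Ω : Type) (m0 : MeasurableSpace Ω) (P : Measure Ω) (_ : IsProbabilityMeasure P)
      (F : Filtration ℕ m0) (u : ℕ → Ω → ℝ), IsInnovation P F ν u := by
  obtain ⟨Ω, m0, P, u, hmeas, hlaw, hind, hP⟩ := exists_iid ℕ ν
  refine ⟨Ω, m0, P, hP, ⟨fun i => ⨆ j ∈ Set.Iio i, MeasurableSpace.comap (u j) inferInstance,
    fun i k hik => biSup_mono fun j hj => lt_of_lt_of_le hj hik,
    fun i => iSup₂_le fun j _ => (hmeas j).comap_le⟩, u, fun i => ?_, hlaw, fun i => ?_⟩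
  · exact (comap_measurable (u i)).mono
      (le_biSup (fun j => MeasurableSpace.comap (u j) inferInstance) (Set.mem_Iio.2 i.lt_succ_self))
      le_rfl
  · simpa using indep_iSup_of_disjoint (fun j => (hmeas j).comap_le) hind
      (Set.disjoint_singleton_right.2 (Set.notMem_Iio.2 le_rfl) : Disjoint (Set.Iio i) {i})

namespace IsInnovation

variable {Ω : Type*} {m0 : MeasurableSpace Ω} {P : Measure Ω} {F : Filtration ℕ m0}
  {ν : Measure ℝ} {u : ℕ → Ω → ℝ}

lemma measurable (hu : IsInnovation P F ν u) (i : ℕ) : Measurable (u i) :=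
  (hu.measurable_succ i).mono (F.le _) le_rfl

lemma condExp_comp [IsFiniteMeasure P] (hu : IsInnovation P F ν u) {i : ℕ} {X : Ω → ℝ}
    (hX : Measurable[F i] X) {g : ℝ × ℝ → ℝ} (hg : Measurable g)
    (h_int : Integrable (fun ω => g (X ω, u i ω)) P) :
    P[fun ω => g (X ω, u i ω) | F i] =ᵐ[P] fun ω => ∫ w, g (X ω, w) ∂ν := by
  simpa only [(hu.hasLaw i).map_eq] using
    condExp_comp_of_indep (F.le i) hX (hu.measurable i) (hu.indep i) hg h_int

lemma measurable_sum (hu : IsInnovation P F ν u) (m : ℕ) :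
    Measurable[F m] fun ω => ∑ j ∈ Finset.range m, u j ω :=
  Finset.measurable_sum _ fun j hj =>
    (hu.measurable_succ j).mono (F.mono (Finset.mem_range.1 hj)) le_rfl

lemma indepFun {X : Ω → ℝ} (hu : IsInnovation P F ν u) {i : ℕ} (hX : Measurable[F i] X) :
    IndepFun X (u i) P :=
  (IndepFun_iff_Indep _ _ _).2 (indep_of_indep_of_le_left (hu.indep i) hX.comap_le)

lemma hasLaw_sum [IsProbabilityMeasure P] {v : NNReal}
    (hu : IsInnovation P F (gaussianReal 0 v) u) (m : ℕ) :
    HasLaw (fun ω => ∑ j ∈ Finset.range m, u j ω) (gaussianReal 0 (m * v)) P := by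
  induction m with
  | zero => simpa using hasLaw_dirac_of_ae_eq (P := P) (EventuallyEq.refl _ fun _ => (0 : ℝ))
  | succ m ih =>
    simpa [Finset.sum_range_succ] using hasLaw_add_const_mul_gaussianReal (a := 1)
      (w := (m + 1 : ℕ) * v) ih (hu.hasLaw m) (hu.indepFun (hu.measurable_sum m))
      (by push_cast; ring)

end IsInnovation

end Innovations

section SwitchedIncrements

/-- The martingale differences driven by the innovations `u`, with step sizes `a` and predictable
controls `c`. Increments are numbered from `1`, so the `i`-th one uses the data of index
`i - 1`. -/
def switchedIncrement {Ω : Type*} (u c : ℕ → Ω → ℝ) (a : ℕ → ℝ) (i : ℕ) (ω : Ω) : ℝ :=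
  a (i - 1) * signSwitch (c (i - 1) ω) (u (i - 1) ω)

lemma sum_Icc_one_eq_sum_range {M : Type*} [AddCommMonoid M] (f : ℕ → M) (n : ℕ) :
    ∑ i ∈ Finset.Icc 1 n, f i = ∑ i ∈ Finset.range n, f (i + 1) := by
  rw [Finset.range_eq_Ico, Finset.sum_Ico_add', zero_add, Finset.Ico_add_one_right_eq_Icc]

variable {Ω : Type*} {m0 : MeasurableSpace Ω} {P : Measure Ω} {F : Filtration ℕ m0}
  {u c : ℕ → Ω → ℝ}

lemma measurable_switchedIncrement {ν : Measure ℝ} (hu : IsInnovation P F ν u)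
    (hc : ∀ i, Measurable[F i] (c i)) (a : ℕ → ℝ) (i : ℕ) :
    Measurable[F (i + 1)] (switchedIncrement u c a (i + 1)) :=
  (measurable_signSwitch.comp
    (((hc i).mono (F.mono i.le_succ) le_rfl).prodMk (hu.measurable_succ i))).const_mul _

variable [IsProbabilityMeasure P] (hu : IsInnovation P F (gaussianReal 0 1) u)
  (hc : ∀ i, Measurable[F i] (c i)) (a : ℕ → ℝ)
include hu hc

lemma memLp_switchedIncrement (i : ℕ) {q : ENNReal} (hq : q ≠ ⊤) :
    MemLp (switchedIncrement u c a (i + 1)) q P :=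
  (memLp_signSwitch ((hc i).mono (F.le i) le_rfl).aemeasurable
    (memLp_of_hasLaw_gaussianReal (hu.hasLaw i) hq)).const_mul _

lemma condExp_switchedIncrement (i : ℕ) :
    P[switchedIncrement u c a (i + 1) | F i] =ᵐ[P] 0 := by
  refine (hu.condExp_comp (hc i) (g := fun q => a i * signSwitch q.1 q.2)
    (measurable_signSwitch.const_mul _)
    (memLp_one_iff_integrable.1 (memLp_switchedIncrement hu hc a i (by simp)))).trans ?_
  simp only [integral_const_mul, integral_signSwitch, mul_zero]
  rfl

lemma condExp_switchedIncrement_sq (i : ℕ) :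
    P[fun ω => switchedIncrement u c a (i + 1) ω ^ 2 | F i] =ᵐ[P] fun _ => a i ^ 2 := by
  refine (hu.condExp_comp (hc i) (g := fun q => (a i * signSwitch q.1 q.2) ^ 2)
    ((measurable_signSwitch.const_mul _).pow_const 2)
    (memLp_switchedIncrement hu hc a i (by simp)).integrable_sq).trans ?_
  simp only [mul_pow, integral_const_mul, integral_signSwitch_sq, mul_one]
  rfl

lemma isMDS_switchedIncrement (n : ℕ) : IsMDS P F n (switchedIncrement u c a) where
  le := F.le
  mono _ _ h := F.mono h
  adapted i hi _ := by
    obtain ⟨i, rfl⟩ := Nat.exists_eq_add_of_le' hi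
    exact measurable_switchedIncrement hu hc a i
  memL2 i hi _ := by
    obtain ⟨i, rfl⟩ := Nat.exists_eq_add_of_le' hi
    exact memLp_switchedIncrement hu hc a i (by simp)
  mdiff i hi _ := by
    obtain ⟨i, rfl⟩ := Nat.exists_eq_add_of_le' hi
    exact condExp_switchedIncrement hu hc a i

lemma sum_condExp_switchedIncrement_sq (n : ℕ) :
    (fun ω => ∑ i ∈ Finset.Icc 1 n,
      (P[fun ω' => switchedIncrement u c a i ω' ^ 2 | F (i - 1)]) ω)
      =ᵐ[P] fun _ => ∑ i ∈ Finset.range n, a i ^ 2 := by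
  filter_upwards [ae_all_iff.2 (condExp_switchedIncrement_sq hu hc a)] with ω hω
  rw [sum_Icc_one_eq_sum_range]
  exact Finset.sum_congr rfl fun i _ => hω i

lemma integral_switchedIncrement_sq (i : ℕ) :
    ∫ ω, switchedIncrement u c a (i + 1) ω ^ 2 ∂P = a i ^ 2 := by
  rw [← integral_condExp (F.le i), integral_congr_ae (condExp_switchedIncrement_sq hu hc a i)]
  simp

lemma sum_integral_switchedIncrement_sq (n : ℕ) :
    ∑ i ∈ Finset.Icc 1 n, ∫ ω, switchedIncrement u c a i ω ^ 2 ∂P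
      = ∑ i ∈ Finset.range n, a i ^ 2 := by
  simp only [sum_Icc_one_eq_sum_range, integral_switchedIncrement_sq hu hc a]

lemma abs_rpow_le_integral_abs_switchedIncrement_rpow (i : ℕ) {p : ℝ} (hp : 2 ≤ p) :
    |a i| ^ p ≤ ∫ ω, |switchedIncrement u c a (i + 1) ω| ^ p ∂P := by
  have h := rpow_integral_sq_le_integral_abs_rpow hp
    (memLp_switchedIncrement hu hc a i (q := ENNReal.ofReal p) (by simp))
  rwa [integral_switchedIncrement_sq hu hc, ← sq_abs, ← Real.rpow_natCast_mul (abs_nonneg _),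
    Nat.cast_ofNat, mul_div_cancel₀ p two_ne_zero] at h

lemma integral_abs_switchedIncrement_rpow_le (i : ℕ) {p : ℝ} (hp : 2 ≤ p) :
    ∫ ω, |switchedIncrement u c a (i + 1) ω| ^ p ∂P
      ≤ |a i| ^ p * ∫ w, |w| ^ p ∂gaussianReal 0 1 := by
  have h_int : Integrable (fun ω => |switchedIncrement u c a (i + 1) ω| ^ p) P := by
    simpa [ENNReal.toReal_ofReal (two_pos.le.trans hp)] using
      (memLp_switchedIncrement hu hc a i (q := ENNReal.ofReal p) (by simp)).integrable_norm_rpow'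
  have hcond := hu.condExp_comp (hc i) (g := fun q => |a i * signSwitch q.1 q.2| ^ p)
    (by have := measurable_signSwitch; fun_prop) h_int
  have hle : P[fun ω => |switchedIncrement u c a (i + 1) ω| ^ p | F i]
      ≤ᵐ[P] fun _ => |a i| ^ p * ∫ w, |w| ^ p ∂gaussianReal 0 1 := by
    filter_upwards [hcond] with ω hω
    refine hω.trans_le ?_
    simp only [abs_mul, Real.mul_rpow (abs_nonneg _) (abs_nonneg _), integral_const_mul]
    exact mul_le_mul_of_nonneg_left (integral_abs_signSwitch_rpow_le _ hp) (by positivity)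
  rw [← integral_condExp (F.le i)]
  simpa using integral_mono_ae integrable_condExp (integrable_const _) hle

lemma sum_abs_rpow_le_sum_integral_abs_switchedIncrement_rpow (n : ℕ) {p : ℝ} (hp : 2 ≤ p) :
    ∑ i ∈ Finset.range n, |a i| ^ p
      ≤ ∑ i ∈ Finset.Icc 1 n, ∫ ω, |switchedIncrement u c a i ω| ^ p ∂P := by
  rw [sum_Icc_one_eq_sum_range]
  exact Finset.sum_le_sum fun i _ => abs_rpow_le_integral_abs_switchedIncrement_rpow hu hc a i hp

lemma sum_integral_abs_switchedIncrement_rpow_le (n : ℕ) {p : ℝ} (hp : 2 ≤ p) :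
    ∑ i ∈ Finset.Icc 1 n, ∫ ω, |switchedIncrement u c a i ω| ^ p ∂P
      ≤ (∑ i ∈ Finset.range n, |a i| ^ p) * ∫ w, |w| ^ p ∂gaussianReal 0 1 := by
  rw [sum_Icc_one_eq_sum_range, Finset.sum_mul]
  exact Finset.sum_le_sum fun i _ => integral_abs_switchedIncrement_rpow_le hu hc a i hp

end SwitchedIncrements

section LastStep

lemma integral_abs_gaussianReal_le_one : ∫ w, |w| ∂gaussianReal 0 1 ≤ 1 := by
  have hsq : Integrable (fun w : ℝ => w ^ 2) (gaussianReal 0 1) :=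
    (memLp_id_gaussianReal' 2 (by simp)).integrable_sq
  calc ∫ w, |w| ∂gaussianReal 0 1
      ≤ ∫ w, (1 + w ^ 2) / 2 ∂gaussianReal 0 1 :=
        integral_mono_of_nonneg (ae_of_all _ abs_nonneg)
          (((integrable_const 1).add hsq).div_const 2)
          (ae_of_all _ fun w => by nlinarith [sq_nonneg (|w| - 1), sq_abs w])
    _ = 1 := by
        rw [integral_div, integral_add (integrable_const 1) hsq, integral_sq_gaussianReal]
        norm_num

variable {Ω : Type*} [MeasurableSpace Ω] {P : Measure Ω} [IsProbabilityMeasure P] {S U : Ω → ℝ}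
  {v : NNReal} {δ : ℝ}

lemma integral_abs_signSwitch_sub_le (C : Ω → ℝ) (hU : HasLaw U (gaussianReal 0 1) P) :
    ∫ ω, |signSwitch (C ω) (U ω) - U ω| ∂P ≤ 2 := by
  have h_int : Integrable U P :=
    memLp_one_iff_integrable.1 (memLp_of_hasLaw_gaussianReal hU (by simp))
  have habs : ∫ ω, |U ω| ∂P = ∫ w, |w| ∂gaussianReal 0 1 :=
    hU.integral_comp (f := fun w => |w|) (by fun_prop)
  calc ∫ ω, |signSwitch (C ω) (U ω) - U ω| ∂P ≤ ∫ ω, 1 + |U ω| ∂P :=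
        integral_mono_of_nonneg (ae_of_all _ fun _ => abs_nonneg _)
          ((integrable_const 1).add h_int.abs) (ae_of_all _ fun _ => abs_signSwitch_sub_le _ _)
    _ = 1 + ∫ ω, |U ω| ∂P := by
        rw [integral_add (integrable_const 1) h_int.abs]
        simp
    _ ≤ 2 := by linarith [integral_abs_gaussianReal_le_one]

lemma wassersteinDist_add_mul_signSwitch_le (hS : HasLaw S (gaussianReal 0 v) P)
    (hU : HasLaw U (gaussianReal 0 1) P) (hSU : IndepFun S U P) {C : Ω → ℝ}
    (hC : AEMeasurable C P) (hδ : 0 ≤ δ) {v' : NNReal} (hv' : (v' : ℝ) = v + δ ^ 2) :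
    wassersteinDist 1 (P.map fun ω => S ω + δ * signSwitch (C ω) (U ω)) (gaussianReal 0 v')
      ≤ 2 * δ := by
  have hlaw : HasLaw (fun ω => S ω + δ * U ω) (gaussianReal 0 v') P :=
    hasLaw_add_const_mul_gaussianReal hS hU hSU (by simpa using hv')
  have hmeas : AEMeasurable (fun ω => S ω + δ * signSwitch (C ω) (U ω)) P :=
    hS.aemeasurable.add
      ((measurable_signSwitch.comp_aemeasurable (hC.prodMk hU.aemeasurable)).const_mul δ)
  calc _ ≤ ∫ ω, |S ω + δ * signSwitch (C ω) (U ω) - (S ω + δ * U ω)| ∂P := by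
        simpa [hlaw.map_eq] using wassersteinDist_map_le 1 hmeas hlaw.aemeasurable
    _ = δ * ∫ ω, |signSwitch (C ω) (U ω) - U ω| ∂P := by
        simp [add_sub_add_left_eq_sub, ← mul_sub, abs_mul, abs_of_nonneg hδ, integral_const_mul]
    _ ≤ 2 * δ := by nlinarith [integral_abs_signSwitch_sub_le C hU]

-- For `w = ±1` the step moves `θ * x` by half a period.
lemma le_integral_cos_mul_add_signSwitch {θ : ℝ} (hθ : θ * δ = π) (x : ℝ) :
    (Real.cos (θ * x) ^ 2 - Real.cos (θ * x)) / 2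
      ≤ ∫ w, Real.cos (θ * (x + δ * signSwitch (Real.cos (θ * x)) w)) ∂gaussianReal 0 1 := by
  have hexpand : ∀ w, θ * (x + δ * w) = θ * x + π * w := fun w => by rw [← hθ]; ring
  simp only [hexpand]
  rcases lt_or_ge (Real.cos (θ * x)) 0 with hneg | hnonneg
  · have hflip : ∀ᵐ w ∂gaussianReal 0 1,
        Real.cos (θ * x + π * signSwitch (Real.cos (θ * x)) w) = -Real.cos (θ * x) := by
      filter_upwards [ae_abs_sign_gaussianReal one_ne_zero] with w hw
      rw [signSwitch_of_neg hneg]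
      rcases eq_or_eq_neg_of_abs_eq hw with h | h <;> simp [h, ← sub_eq_add_neg]
    rw [integral_congr_ae hflip]
    rw [integral_const, probReal_univ, one_smul]
    nlinarith [Real.neg_one_le_cos (θ * x)]
  · have hcos : Integrable (fun w => Real.cos (π * w)) (gaussianReal 0 1) :=
      .of_bound (C := 1) (by fun_prop) (ae_of_all _ fun w => Real.abs_cos_le_one _)
    have hsin : Integrable (fun w => Real.sin (π * w)) (gaussianReal 0 1) :=
      .of_bound (C := 1) (by fun_prop) (ae_of_all _ fun w => Real.abs_sin_le_one _)
    simp only [signSwitch_of_nonneg hnonneg, Real.cos_add]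
    rw [integral_sub (hcos.const_mul _) (hsin.const_mul _), integral_const_mul,
      integral_const_mul, integral_cos_mul_gaussianReal, integral_sin_mul_gaussianReal]
    nlinarith [Real.cos_le_one (θ * x),
      mul_nonneg hnonneg (Real.exp_nonneg (-((1 : NNReal) * π ^ 2 / 2)))]

lemma le_integral_cos_sq_sub_cos_gaussianReal (v : NNReal) (θ : ℝ) :
    1 / 4 - Real.exp (-(v * θ ^ 2 / 2)) / 2
      ≤ ∫ x, (Real.cos (θ * x) ^ 2 - Real.cos (θ * x)) / 2 ∂gaussianReal 0 v := by
  have hcos : ∀ t : ℝ, Integrable (fun x => Real.cos (t * x)) (gaussianReal 0 v) := fun t =>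
    .of_bound (C := 1) (by fun_prop) (ae_of_all _ fun x => Real.abs_cos_le_one _)
  have hdouble : ∀ x, (Real.cos (θ * x) ^ 2 - Real.cos (θ * x)) / 2
      = 1 / 4 + Real.cos (2 * θ * x) / 4 - Real.cos (θ * x) / 2 := fun x => by
    rw [Real.cos_sq, ← mul_assoc]; ring
  have hsum : Integrable (fun x => 1 / 4 + Real.cos (2 * θ * x) / 4) (gaussianReal 0 v) :=
    (integrable_const _).add ((hcos _).div_const 4)
  simp only [hdouble]
  rw [integral_sub hsum ((hcos _).div_const 2),
    integral_add (integrable_const _) ((hcos _).div_const 4), integral_const, probReal_univ,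
    one_smul, integral_div, integral_div, integral_cos_mul_gaussianReal,
    integral_cos_mul_gaussianReal]
  linarith [Real.exp_nonneg (-(v * (2 * θ) ^ 2 / 2))]

lemma le_integral_cos_add_mul_signSwitch (hS : HasLaw S (gaussianReal 0 v) P)
    (hU : HasLaw U (gaussianReal 0 1) P) (hSU : IndepFun S U P) {θ : ℝ} (hθ : θ * δ = π) :
    1 / 4 - Real.exp (-(v * θ ^ 2 / 2)) / 2
      ≤ ∫ ω, Real.cos (θ * (S ω + δ * signSwitch (Real.cos (θ * S ω)) (U ω))) ∂P := by
  set g : ℝ × ℝ → ℝ := fun q => Real.cos (θ * (q.1 + δ * signSwitch (Real.cos (θ * q.1)) q.2))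
    with hg
  have hg_meas : Measurable g := by
    have := measurable_signSwitch.comp
      ((by fun_prop : Measurable fun q : ℝ × ℝ => (Real.cos (θ * q.1), q.2)))
    simp only [hg]
    fun_prop
  have hg_int : Integrable g ((gaussianReal 0 v).prod (gaussianReal 0 1)) :=
    .of_bound (C := 1) hg_meas.aestronglyMeasurable (ae_of_all _ fun q => Real.abs_cos_le_one _)
  calc _ ≤ ∫ x, (Real.cos (θ * x) ^ 2 - Real.cos (θ * x)) / 2 ∂gaussianReal 0 v :=
        le_integral_cos_sq_sub_cos_gaussianReal v θ
    _ ≤ ∫ x, ∫ w, g (x, w) ∂gaussianReal 0 1 ∂gaussianReal 0 v :=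
        integral_mono (.of_bound (C := 1) (by fun_prop) (ae_of_all _ fun x => by
          rw [Real.norm_eq_abs, abs_le]
          constructor <;> nlinarith [Real.neg_one_le_cos (θ * x), Real.cos_le_one (θ * x)]))
          hg_int.integral_prod_left fun x => le_integral_cos_mul_add_signSwitch hθ x
    _ = ∫ q, g q ∂(gaussianReal 0 v).prod (gaussianReal 0 1) := (integral_prod g hg_int).symm
    _ = ∫ ω, g (S ω, U ω) ∂P :=
        ((hSU.hasLaw_prod hS hU).integral_comp hg_meas.aestronglyMeasurable).symm

lemma exp_neg_le_one_div_one_add {x : ℝ} (hx : 0 ≤ x) : Real.exp (-x) ≤ 1 / (1 + x) := by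
  rw [Real.exp_neg, one_div]
  exact inv_anti₀ (by positivity) (by linarith [Real.add_one_le_exp x])

lemma one_div_eight_le_sub_exp_neg {θ : ℝ} (hv : 3 / 4 ≤ (v : ℝ)) (hθ : 6 ≤ θ) :
    1 / 8 ≤ 1 / 4 - Real.exp (-(v * θ ^ 2 / 2)) / 2 - Real.exp (-(θ ^ 2 / 2)) := by
  have hθsq : 36 ≤ θ ^ 2 := by nlinarith
  have hexp : ∀ y : ℝ, 27 / 2 ≤ y → Real.exp (-y) ≤ 2 / 29 := fun y hy =>
    (exp_neg_le_one_div_one_add (by linarith)).trans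
      ((one_div_le_one_div_of_le (by norm_num) (by linarith : 29 / 2 ≤ 1 + y)).trans (by norm_num))
  linarith [hexp (v * θ ^ 2 / 2) (by nlinarith), hexp (θ ^ 2 / 2) (by linarith)]

lemma lipschitzWith_cos_mul (θ : ℝ) : LipschitzWith ‖θ‖₊ fun x => Real.cos (θ * x) := by
  simpa [Function.comp_def] using Real.lipschitzWith_cos.comp (lipschitzWith_smul θ)

lemma le_wassersteinDist_add_mul_signSwitch_cos (hS : HasLaw S (gaussianReal 0 v) P)
    (hU : HasLaw U (gaussianReal 0 1) P) (hSU : IndepFun S U P) (hδ : 0 < δ) (hδ' : δ ≤ 1 / 2)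
    (hv : (v : ℝ) + δ ^ 2 = 1) :
    δ / 32 ≤ wassersteinDist 1
      (P.map fun ω => S ω + δ * signSwitch (Real.cos (π / δ * S ω)) (U ω)) (gaussianReal 0 1) := by
  have hθ : π / δ * δ = π := div_mul_cancel₀ π hδ.ne'
  have hθ6 : 6 ≤ π / δ := by
    rw [le_div_iff₀ hδ]
    linarith [Real.pi_gt_three]
  have hX : MemLp (fun ω => S ω + δ * signSwitch (Real.cos (π / δ * S ω)) (U ω)) 1 P :=
    (memLp_of_hasLaw_gaussianReal hS (by simp)).add ((memLp_signSwitch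
      (Real.measurable_cos.comp_aemeasurable (hS.aemeasurable.const_mul _))
      (memLp_of_hasLaw_gaussianReal hU (by simp))).const_mul δ)
  have := Measure.isProbabilityMeasure_map hX.aemeasurable
  have hdual := integral_sub_integral_le_mul_wassersteinDist_one
    (memLp_one_iff_integrable.1
      ((memLp_map_measure_iff (by fun_prop) hX.aemeasurable).2 hX))
    (memLp_one_iff_integrable.1 (memLp_id_gaussianReal' (μ := 0) (v := 1) 1 (by simp)))
    (lipschitzWith_cos_mul (π / δ))
  rw [integral_map hX.aemeasurable (by fun_prop), integral_cos_mul_gaussianReal, coe_nnnorm,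
    Real.norm_of_nonneg (by positivity), NNReal.coe_one, one_mul] at hdual
  have hgap := one_div_eight_le_sub_exp_neg (v := v) (by nlinarith) hθ6
  have hcos := le_integral_cos_add_mul_signSwitch hS hU hSU hθ
  have hdist := hgap.trans ((sub_le_sub_right hcos _).trans hdual)
  rw [div_mul_eq_mul_div, le_div_iff₀ hδ] at hdist
  nlinarith [Real.pi_le_four]

end LastStep

section Construction

/-- Step sizes of the extremal example: `m` steps of size `s`, then steps of size `δ`. -/
def lastStepScale (m : ℕ) (s δ : ℝ) (i : ℕ) : ℝ := if i < m then s else δ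

/-- Controls of the extremal example: the first `m` steps are Gaussian, and afterwards the sign
switch is governed by the position of the walk relative to the period `2 * δ`. -/
def lastStepControl {Ω : Type*} (u : ℕ → Ω → ℝ) (m : ℕ) (s δ : ℝ) (i : ℕ) (ω : Ω) : ℝ :=
  if i < m then 0 else Real.cos (π / δ * (s * ∑ j ∈ Finset.range m, u j ω))

lemma sum_comp_lastStepScale (m : ℕ) (s δ : ℝ) (f : ℝ → ℝ) :
    ∑ i ∈ Finset.range (m + 1), f (lastStepScale m s δ i) = m * f s + f δ := by
  have hgauss : ∀ i ∈ Finset.range m, f (lastStepScale m s δ i) = f s := fun i hi => by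
    rw [lastStepScale, if_pos (Finset.mem_range.1 hi)]
  rw [Finset.sum_range_succ, Finset.sum_congr rfl hgauss]
  simp [lastStepScale]

lemma sum_switchedIncrement_lastStep {Ω : Type*} (u : ℕ → Ω → ℝ) (m : ℕ) (s δ : ℝ) (ω : Ω) :
    ∑ i ∈ Finset.Icc 1 (m + 1),
        switchedIncrement u (lastStepControl u m s δ) (lastStepScale m s δ) i ω
      = s * ∑ j ∈ Finset.range m, u j ω
        + δ * signSwitch (Real.cos (π / δ * (s * ∑ j ∈ Finset.range m, u j ω))) (u m ω) := by
  have hgauss : ∀ i ∈ Finset.range m,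
      switchedIncrement u (lastStepControl u m s δ) (lastStepScale m s δ) (i + 1) ω
        = s * u i ω := fun i hi => by
    simp [switchedIncrement, lastStepControl, lastStepScale, Finset.mem_range.1 hi, signSwitch]
  rw [sum_Icc_one_eq_sum_range, Finset.sum_range_succ, Finset.sum_congr rfl hgauss,
    ← Finset.mul_sum]
  simp [switchedIncrement, lastStepControl, lastStepScale]

variable {Ω : Type*} {m0 : MeasurableSpace Ω} {P : Measure Ω} {F : Filtration ℕ m0}
  {u : ℕ → Ω → ℝ} {m : ℕ} {s δ : ℝ}

lemma measurable_lastStepControl {ν : Measure ℝ} (hu : IsInnovation P F ν u) (m : ℕ) (s δ : ℝ)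
    (i : ℕ) : Measurable[F i] (lastStepControl u m s δ i) := by
  unfold lastStepControl
  split_ifs with hi
  · exact measurable_const
  · exact Real.measurable_cos.comp ((((hu.measurable_sum m).mono (F.mono (not_lt.1 hi))
      le_rfl).const_mul _).const_mul _)

variable [IsProbabilityMeasure P] (hu : IsInnovation P F (gaussianReal 0 1) u)
include hu

lemma wassersteinDist_sum_switchedIncrement_lastStep (hδ : 0 < δ) (hδ' : δ ≤ 1 / 2)
    (hvar : m * s ^ 2 + δ ^ 2 = 1) :
    wassersteinDist 1 (P.map fun ω => ∑ i ∈ Finset.Icc 1 (m + 1),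
        switchedIncrement u (lastStepControl u m s δ) (lastStepScale m s δ) i ω) (gaussianReal 0 1)
      ∈ Set.Icc (δ / 32) (2 * δ) := by
  have hS_meas : Measurable[F m] fun ω => s * ∑ j ∈ Finset.range m, u j ω :=
    (hu.measurable_sum m).const_mul s
  have hS := gaussianReal_const_mul (hu.hasLaw_sum m) s
  rw [mul_zero] at hS
  simp only [sum_switchedIncrement_lastStep]
  constructor
  · exact le_wassersteinDist_add_mul_signSwitch_cos hS (hu.hasLaw m) (hu.indepFun hS_meas) hδ hδ'
      (by simpa [mul_comm] using hvar)
  · exact wassersteinDist_add_mul_signSwitch_le hS (hu.hasLaw m) (hu.indepFun hS_meas)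
      (Real.measurable_cos.comp_aemeasurable (hS.aemeasurable.const_mul _)) hδ.le
      (by simpa [mul_comm] using hvar.symm)

lemma lyapunov_switchedIncrement_lastStep {p : ℝ} (hp : 2 ≤ p) (hs : 0 ≤ s) (hδ : 0 < δ)
    (hsδ : m * s ^ p ≤ δ ^ p) :
    (∑ i ∈ Finset.Icc 1 (m + 1), ∫ ω,
        |switchedIncrement u (lastStepControl u m s δ) (lastStepScale m s δ) i ω| ^ p ∂P) ^ (1 / p)
      ∈ Set.Icc δ ((2 * ∫ w, |w| ^ p ∂gaussianReal 0 1) ^ (1 / p) * δ) := by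
  have hp0 : 0 < p := by linarith
  have hc := measurable_lastStepControl hu m s δ
  have hscale : ∑ i ∈ Finset.range (m + 1), |lastStepScale m s δ i| ^ p = m * s ^ p + δ ^ p := by
    rw [sum_comp_lastStepScale m s δ (|·| ^ p), abs_of_nonneg hs, abs_of_pos hδ]
  have hlower := sum_abs_rpow_le_sum_integral_abs_switchedIncrement_rpow hu hc
    (lastStepScale m s δ) (m + 1) hp
  have hupper := sum_integral_abs_switchedIncrement_rpow_le hu hc
    (lastStepScale m s δ) (m + 1) hp
  rw [hscale] at hlower hupper
  set T := ∑ i ∈ Finset.Icc 1 (m + 1), ∫ ω,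
    |switchedIncrement u (lastStepControl u m s δ) (lastStepScale m s δ) i ω| ^ p ∂P
  set M := ∫ w, |w| ^ p ∂gaussianReal 0 1
  have hM : 1 ≤ M := one_le_integral_abs_rpow_gaussianReal hp
  have hδp : 0 ≤ δ ^ p := by positivity
  have hT : δ ^ p ≤ T := (le_add_of_nonneg_left (by positivity)).trans hlower
  have hroot : (δ ^ p) ^ (1 / p) = δ := by rw [one_div, Real.rpow_rpow_inv hδ.le hp0.ne']
  constructor
  · calc δ = (δ ^ p) ^ (1 / p) := hroot.symm
      _ ≤ T ^ (1 / p) := by gcongr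
  · calc T ^ (1 / p) ≤ (2 * M * δ ^ p) ^ (1 / p) := by
          gcongr
          nlinarith
      _ = (2 * M) ^ (1 / p) * δ := by rw [Real.mul_rpow (by positivity) hδp, hroot]

end Construction

section StepSizes

lemma mul_rpow_le_of_mul_sq_le_one {m s p : ℝ} (hm : 0 < m) (hs : 0 ≤ s) (hp : 0 ≤ p)
    (h : m * s ^ 2 ≤ 1) : m * s ^ p ≤ m ^ (1 - p / 2) := by
  have hsq : s ^ 2 ≤ m⁻¹ := by rwa [← one_div, le_div_iff₀' hm]
  have hpow : s ^ p = (s ^ 2) ^ (p / 2) := by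
    rw [← Real.rpow_natCast_mul hs, Nat.cast_ofNat, mul_div_cancel₀ p two_ne_zero]
  calc m * s ^ p ≤ m * m⁻¹ ^ (p / 2) := by rw [hpow]; gcongr
    _ = m ^ (1 - p / 2) := by
      rw [Real.inv_rpow hm.le, Real.rpow_sub hm, Real.rpow_one, ← div_eq_mul_inv]

lemma eventually_log_rpow_le_half_rpow (p : ℝ) {q : ℝ} (hq : 0 < q) :
    ∀ᶠ x : ℝ in atTop, Real.log x ^ p ≤ (x / 2) ^ q := by
  have hlittle := (isLittleO_log_rpow_rpow_atTop p hq).bound (c := (1 / 2) ^ q) (by positivity)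
  filter_upwards [hlittle, eventually_ge_atTop 0] with x hx hx0
  rw [Real.norm_of_nonneg (Real.rpow_nonneg hx0 q), ← Real.mul_rpow (by positivity) hx0] at hx
  calc Real.log x ^ p ≤ (1 / 2 * x) ^ q := (le_abs_self _).trans hx
    _ = (x / 2) ^ q := by rw [one_div_mul_eq_div]

lemma eventually_exists_step_sizes {p : ℝ} (hp : 2 < p) :
    ∀ᶠ n : ℕ in atTop, ∃ (m : ℕ) (s : ℝ), n = m + 1 ∧ 0 ≤ s ∧
      1 / Real.log n ∈ Set.Ioc 0 (1 / 2) ∧ m * s ^ 2 + (1 / Real.log n) ^ 2 = 1 ∧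
      m * s ^ p ≤ (1 / Real.log n) ^ p := by
  filter_upwards [eventually_ge_atTop 2, tendsto_natCast_atTop_atTop.eventually
      (eventually_log_rpow_le_half_rpow p (q := p / 2 - 1) (by linarith)),
    (Real.tendsto_log_atTop.comp tendsto_natCast_atTop_atTop).eventually_ge_atTop 2]
    with n hn hlog hlog2
  obtain ⟨m, rfl⟩ := Nat.exists_eq_add_of_le' (one_le_two.trans hn)
  have hm : (1 : ℝ) ≤ m := by exact_mod_cast Nat.le_of_succ_le_succ hn
  set ℓ := Real.log (m + 1 : ℕ)
  replace hlog2 : 2 ≤ ℓ := hlog2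
  have hδ : (1 / ℓ) ^ 2 ≤ 1 := by
    rw [div_pow, one_pow, div_le_one (by positivity)]
    nlinarith
  set s := √((1 - (1 / ℓ) ^ 2) / m)
  have hs : 0 ≤ s := Real.sqrt_nonneg _
  have hvar : m * s ^ 2 + (1 / ℓ) ^ 2 = 1 := by
    rw [Real.sq_sqrt (div_nonneg (by linarith) (by linarith)), mul_div_cancel₀ _ (by positivity),
      sub_add_cancel]
  refine ⟨m, s, rfl, hs, ⟨by positivity, one_div_le_one_div_of_le two_pos hlog2⟩, hvar, ?_⟩
  calc m * s ^ p ≤ (m : ℝ) ^ (1 - p / 2) :=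
        mul_rpow_le_of_mul_sq_le_one (by linarith) hs (by linarith)
          (by linarith [sq_nonneg (1 / ℓ)])
    _ = 1 / (m : ℝ) ^ (p / 2 - 1) := by
        rw [one_div, ← Real.rpow_neg (by positivity), neg_sub]
    _ ≤ 1 / ℓ ^ p := by
        refine one_div_le_one_div_of_le (by positivity) (hlog.trans ?_)
        refine Real.rpow_le_rpow (by positivity) ?_ (by linarith)
        push_cast
        linarith
    _ = (1 / ℓ) ^ p := by rw [Real.div_rpow zero_le_one (by positivity), Real.one_rpow]

end StepSizes

/-- Proposition 2.5(1): optimality of the `W₁` rate `L_p`. -/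
theorem w1_optimal_Lp (p : ℝ) (hp : 2 < p) :
    ∃ (N₀ : ℕ) (c C : ℝ), 0 < c ∧ 0 < C ∧
      ∀ n : ℕ, N₀ < n →
        ∃ (Ω : Type) (m0 : MeasurableSpace Ω) (μ : Measure Ω) (_ : IsProbabilityMeasure μ)
          (F : ℕ → MeasurableSpace Ω) (Y : ℕ → Ω → ℝ) (sn : ℝ),
          IsMDS μ F n Y ∧ 0 < sn ∧
          sn ^ 2 = (∑ i ∈ Finset.Icc 1 n, ∫ ω, (Y i ω) ^ 2 ∂μ) ∧
          ((fun ω => (∑ i ∈ Finset.Icc 1 n, (μ[fun ω' => (Y i ω') ^ 2 | F (i - 1)]) ω) / sn ^ 2)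
          =ᵐ[μ] (fun _ => (1 : ℝ))) ∧
          ((∑ i ∈ Finset.Icc 1 n, ∫ ω, |Y i ω| ^ p ∂μ) ^ (1 / p) / sn) ≤ C / Real.log n ∧
          c * ((∑ i ∈ Finset.Icc 1 n, ∫ ω, |Y i ω| ^ p ∂μ) ^ (1 / p) / sn) ≤ wassersteinDist 1 (μ.map fun ω => (∑ i ∈ Finset.Icc 1 n, Y i ω) / sn) stdGaussian ∧
          wassersteinDist 1 (μ.map fun ω => (∑ i ∈ Finset.Icc 1 n, Y i ω) / sn) stdGaussian ≤ C * ((∑ i ∈ Finset.Icc 1 n, ∫ ω, |Y i ω| ^ p ∂μ) ^ (1 / p) / sn) := by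
  have hM := one_le_integral_abs_rpow_gaussianReal hp.le
  set K := (2 * ∫ w, |w| ^ p ∂gaussianReal 0 1) ^ (1 / p)
  have hK : 0 < K := by positivity
  obtain ⟨N₀, hN₀⟩ := eventually_atTop.1 (eventually_exists_step_sizes hp)
  refine ⟨N₀, 1 / (32 * K), K + 2, by positivity, by positivity, fun n hn => ?_⟩
  obtain ⟨m, s, rfl, hs, ⟨hδ, hδ_half⟩, hvar, hsδ⟩ := hN₀ n hn.le
  set δ := 1 / Real.log (m + 1 : ℕ)
  obtain ⟨Ω, m0, P, hP, F, u, hu⟩ := exists_isInnovation (gaussianReal 0 1)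
  have hc := measurable_lastStepControl hu m s δ
  have hscale := (sum_comp_lastStepScale m s δ (· ^ 2)).trans hvar
  obtain ⟨hL_ge, hL_le⟩ := lyapunov_switchedIncrement_lastStep hu hp.le hs hδ hsδ
  obtain ⟨hW_ge, hW_le⟩ := wassersteinDist_sum_switchedIncrement_lastStep hu hδ hδ_half hvar
  refine ⟨Ω, m0, P, hP, F, switchedIncrement u (lastStepControl u m s δ) (lastStepScale m s δ), 1,
    isMDS_switchedIncrement hu hc _ _, one_pos, ?_, ?_, ?_⟩
  · rw [sum_integral_switchedIncrement_sq hu hc, hscale, one_pow]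
  · filter_upwards [sum_condExp_switchedIncrement_sq hu hc _ _] with ω hω
    rw [hω, hscale, one_pow, div_one]
  · simp only [div_one]
    refine ⟨?_, le_trans ?_ hW_ge, hW_le.trans (by nlinarith)⟩
    · rw [← mul_one_div (K + 2)]
      linarith
    · rw [one_div_mul_eq_div, div_le_div_iff₀ (by positivity) (by norm_num)]
      linarith
end
end

section
/- Let r ≥ 1 be an integer, let f: ℝ → ℝ be (r−1)-times differentiable with f^{(r−1)} 1-Lipschitz, let σ > 0, and define f_σ(x) = E[f(x + σN)] where N is a standard normal random variable. Then for every integer k ≥ r, f_σ is k-times differentiable and sup_{x∈ℝ} |f_σ^{(k)}(x)| ≤ C_{k+1−r} · σ^{r−k}, where C_m = ∫_ℝ |u · φ^{(m)}(u)| du and φ(u) = (2π)^{-1/2} e^{-u²/2} is the standard normal density. -/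
open MeasureTheory ProbabilityTheory Real Filter

noncomputable section

open scoped ENNReal

/-!
Write `f_σ` as the rescaled convolution `(φ ⋆ f(σ ·))(x / σ)`; this reduces everything to `σ = 1`,
a function whose `(r-1)`-st derivative is `σ ^ r`-Lipschitz, and a factor `σ ^ (-k)` from the chain
rule. Derivatives of a convolution with the Schwartz function `φ` may be put on either factor, so
`(φ ⋆ g)^(k) = φ^(k+1-r) ⋆ g^(r-1)`. Since `k + 1 - r ≥ 1`, the kernel `φ^(k+1-r)` has integral
zero, and subtracting the value of the Lipschitz function `g^(r-1)` at `x` leaves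
`∫ φ^(k+1-r)(u) (g^(r-1)(x - u) - g^(r-1)(x)) du`, which is at most `σ ^ r ∫ |u φ^(k+1-r)(u)| du`.
-/

section Smoothing

open SchwartzMap
open scoped Convolution NNReal

variable {V E : Type*} [NormedAddCommGroup V] [NormedAddCommGroup E]

/-- Functions bounded by a power of `1 + ‖x‖`: the growth condition under which convolution with
every Schwartz function converges. Unlike `Function.HasTemperateGrowth`, it asks for no
smoothness and says nothing about derivatives. -/
def PolynomiallyBounded (f : V → E) : Prop :=
  ∃ (C : ℝ) (n : ℕ), ∀ x, ‖f x‖ ≤ C * (1 + ‖x‖) ^ n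

namespace PolynomiallyBounded

theorem of_lipschitzWith {f : V → E} {K : ℝ≥0} (hf : LipschitzWith K f) :
    PolynomiallyBounded f := by
  refine ⟨‖f 0‖ + K, 1, fun x => ?_⟩
  calc ‖f x‖ ≤ ‖f 0‖ + ‖f x - f 0‖ := norm_le_norm_add_norm_sub' _ _
    _ ≤ ‖f 0‖ + K * ‖x‖ := by simpa using hf.norm_sub_le x 0
    _ ≤ (‖f 0‖ + K) * (1 + ‖x‖) ^ 1 := by
      nlinarith [K.coe_nonneg, mul_nonneg (norm_nonneg (f 0)) (norm_nonneg x)]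

theorem of_deriv [NormedSpace ℝ E] {f : ℝ → E} (hf : Differentiable ℝ f)
    (hf' : PolynomiallyBounded (deriv f)) : PolynomiallyBounded f := by
  obtain ⟨C, n, hC⟩ := hf'
  have hC_nonneg : 0 ≤ C := by simpa using (norm_nonneg _).trans (hC 0)
  refine ⟨‖f 0‖ + C, n + 1, fun x => ?_⟩
  have mean_value : ‖f x - f 0‖ ≤ C * (1 + ‖x‖) ^ n * ‖x‖ := by
    simpa using (convex_closedBall (0 : ℝ) ‖x‖).norm_image_sub_le_of_norm_deriv_le
      (fun y _ => hf y)
      (fun y hy => (hC y).trans (by gcongr; exact mem_closedBall_zero_iff.1 hy))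
      (Metric.mem_closedBall_self (norm_nonneg x)) (mem_closedBall_zero_iff.2 le_rfl)
  calc ‖f x‖ ≤ ‖f 0‖ + ‖f x - f 0‖ := norm_le_norm_add_norm_sub' _ _
    _ ≤ ‖f 0‖ * (1 + ‖x‖) ^ (n + 1) + C * (1 + ‖x‖) ^ n * (1 + ‖x‖) := by
      gcongr
      · exact le_mul_of_one_le_right (norm_nonneg _) (one_le_pow₀ (by simp))
      · exact mean_value.trans (by gcongr; simp)
    _ = (‖f 0‖ + C) * (1 + ‖x‖) ^ (n + 1) := by ring

theorem of_iteratedDeriv [NormedSpace ℝ E] {n : ℕ} {f : ℝ → E} (hf : ContDiff ℝ n f)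
    (hfn : PolynomiallyBounded (iteratedDeriv n f)) : PolynomiallyBounded f := by
  induction n generalizing f with
  | zero => simpa using hfn
  | succ n ih =>
    have hf' : ContDiff ℝ (n + 1) f := mod_cast hf
    exact of_deriv (hf'.differentiable (by simp))
      (ih (contDiff_succ_iff_deriv.1 hf').2.2 (by rwa [← iteratedDeriv_succ']))

variable [NormedSpace ℝ V] [NormedSpace ℝ E] {f : V → E}

theorem exists_norm_schwartzMap_sub_smul_le (hf : PolynomiallyBounded f) (ψ : 𝓢(V, ℝ)) (l : ℕ) :
    ∃ (B : ℝ) (N : ℕ), 0 ≤ B ∧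
      ∀ x t, ‖ψ (x - t) • f t‖ ≤ B * (1 + ‖x‖) ^ N * (1 + ‖t‖) ^ (-(l : ℝ)) := by
  obtain ⟨C, n, hC⟩ := hf
  have hC_nonneg : 0 ≤ C := by simpa using (norm_nonneg _).trans (hC 0)
  obtain ⟨D, hD⟩ : ∃ D : ℝ, ∀ u, (1 + ‖u‖) ^ (n + l) * ‖ψ u‖ ≤ D :=
    ⟨_, fun u => by
      simpa only [norm_iteratedFDeriv_zero] using
        one_add_le_sup_seminorm_apply (𝕜 := ℝ) (m := (n + l, 0)) le_rfl le_rfl ψ u⟩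
  have hD_nonneg : 0 ≤ D := le_trans (by positivity) (hD 0)
  refine ⟨C * D, n + l, by positivity, fun x t => ?_⟩
  have peetre : 1 + ‖t‖ ≤ (1 + ‖x‖) * (1 + ‖x - t‖) := by
    nlinarith [norm_sub_norm_le t x, norm_sub_rev t x,
      mul_nonneg (norm_nonneg x) (norm_nonneg (x - t))]
  rw [rpow_neg (by positivity), rpow_natCast, ← div_eq_mul_inv, le_div_iff₀ (by positivity),
    norm_smul]
  calc ‖ψ (x - t)‖ * ‖f t‖ * (1 + ‖t‖) ^ l
      ≤ ‖ψ (x - t)‖ * (C * (1 + ‖t‖) ^ n) * (1 + ‖t‖) ^ l := by gcongr; exact hC t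
    _ = C * ‖ψ (x - t)‖ * (1 + ‖t‖) ^ (n + l) := by ring
    _ ≤ C * ‖ψ (x - t)‖ * ((1 + ‖x‖) * (1 + ‖x - t‖)) ^ (n + l) := by gcongr
    _ = C * ((1 + ‖x - t‖) ^ (n + l) * ‖ψ (x - t)‖) * (1 + ‖x‖) ^ (n + l) := by
      rw [mul_pow]
      ring
    _ ≤ C * D * (1 + ‖x‖) ^ (n + l) := by gcongr; exact hD _

theorem integrable_schwartzMap_sub_smul [MeasurableSpace V] [BorelSpace V]
    [SecondCountableTopology V] {μ : Measure V} [μ.HasTemperateGrowth]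
    (hf : PolynomiallyBounded f) (hfm : AEStronglyMeasurable f μ) (ψ : 𝓢(V, ℝ)) (x : V) :
    Integrable (fun t => ψ (x - t) • f t) μ := by
  obtain ⟨B, N, -, hB⟩ := hf.exists_norm_schwartzMap_sub_smul_le ψ μ.integrablePower
  exact (μ.integrable_pow_neg_integrablePower.const_mul _).mono'
    (Continuous.aestronglyMeasurable (by fun_prop) |>.smul hfm) (ae_of_all _ (hB x))

end PolynomiallyBounded

section Convolution

variable [NormedSpace ℝ E]

theorem norm_convolution_sub_integral_smul_le [CompleteSpace E] [MeasurableSpace V]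
    [OpensMeasurableSpace V] [SecondCountableTopology V] {μ : Measure V} {ψ : V → ℝ}
    (hψ : Integrable ψ μ) (hψ_moment : Integrable (fun u => ‖u‖ * ‖ψ u‖) μ) {h : V → E}
    {K : ℝ≥0} (hh : LipschitzWith K h) (x : V) :
    ‖(ψ ⋆[ContinuousLinearMap.lsmul ℝ ℝ, μ] h) x - (∫ u, ψ u ∂μ) • h x‖ ≤
      K * ∫ u, ‖u‖ * ‖ψ u‖ ∂μ := by
  have bound (u : V) : ‖ψ u • (h (x - u) - h x)‖ ≤ K * (‖u‖ * ‖ψ u‖) := by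
    calc ‖ψ u • (h (x - u) - h x)‖ = ‖ψ u‖ * ‖h (x - u) - h x‖ := norm_smul _ _
      _ ≤ ‖ψ u‖ * (K * ‖u‖) := by
        gcongr
        simpa using hh.norm_sub_le (x - u) x
      _ = K * (‖u‖ * ‖ψ u‖) := by ring
  have hh_cont : Continuous fun u => h (x - u) - h x :=
    (hh.continuous.comp (continuous_const.sub continuous_id)).sub continuous_const
  have increment_integrable : Integrable (fun u => ψ u • (h (x - u) - h x)) μ :=
    (hψ_moment.const_mul (K : ℝ)).mono'
      (hψ.aestronglyMeasurable.smul hh_cont.aestronglyMeasurable) (ae_of_all _ bound)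
  have split : (ψ ⋆[ContinuousLinearMap.lsmul ℝ ℝ, μ] h) x =
      (∫ u, ψ u • (h (x - u) - h x) ∂μ) + (∫ u, ψ u ∂μ) • h x := by
    rw [convolution_lsmul, ← integral_smul_const,
      ← integral_add increment_integrable (hψ.smul_const _)]
    simp only [smul_sub, sub_add_cancel]
  rw [split, add_sub_cancel_right, ← integral_const_mul]
  exact norm_integral_le_of_norm_le (hψ_moment.const_mul _) (ae_of_all _ bound)

variable {f : ℝ → E}

theorem hasDerivAt_convolution_schwartzMap (hf : PolynomiallyBounded f)
    (hfm : AEStronglyMeasurable f) (ψ : 𝓢(ℝ, ℝ)) (x : ℝ) :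
    HasDerivAt (ψ ⋆ f) ((derivCLM ℝ ℝ ψ ⋆ f) x) x := by
  obtain ⟨B, N, hB_nonneg, hB⟩ := hf.exists_norm_schwartzMap_sub_smul_le (derivCLM ℝ ℝ ψ)
    (volume : Measure ℝ).integrablePower
  have integrand_measurable (θ : 𝓢(ℝ, ℝ)) (y : ℝ) :
      AEStronglyMeasurable fun t => θ (y - t) • f t :=
    (hf.integrable_schwartzMap_sub_smul hfm θ y).aestronglyMeasurable
  have norm_le_of_mem_ball {y : ℝ} (hy : y ∈ Metric.ball x 1) : ‖y‖ ≤ ‖x‖ + 1 := by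
    linarith [norm_le_norm_add_norm_sub' y x, mem_ball_iff_norm.1 hy]
  rw [convolution_lsmul_swap, show ψ ⋆ f = fun y => ∫ t, ψ (y - t) • f t from
    funext fun y => convolution_lsmul_swap]
  refine (hasDerivAt_integral_of_dominated_loc_of_deriv_le
    (bound := fun t => B * (1 + (‖x‖ + 1)) ^ N *
      (1 + ‖t‖) ^ (-((volume : Measure ℝ).integrablePower : ℝ)))
    (Metric.ball_mem_nhds x one_pos) (.of_forall (integrand_measurable ψ))
    (hf.integrable_schwartzMap_sub_smul hfm ψ x) (integrand_measurable _ x)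
    (ae_of_all _ fun t y hy => (hB y t).trans ?_)
    ((volume : Measure ℝ).integrable_pow_neg_integrablePower.const_mul _)
    (ae_of_all _ fun t y _ => ?_)).2
  · gcongr
    exact norm_le_of_mem_ball hy
  · exact ((ψ.hasDerivAt (y - t)).comp_sub_const y t).smul_const (f t)

theorem iteratedDeriv_convolution_schwartzMap (hf : PolynomiallyBounded f)
    (hfm : AEStronglyMeasurable f) (ψ : 𝓢(ℝ, ℝ)) (k : ℕ) :
    iteratedDeriv k (ψ ⋆ f) = (derivCLM ℝ ℝ)^[k] ψ ⋆ f := by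
  induction k with
  | zero => simp
  | succ k ih =>
    ext x
    rw [iteratedDeriv_succ, ih, (hasDerivAt_convolution_schwartzMap hf hfm _ x).deriv,
      Function.iterate_succ_apply']

theorem contDiff_convolution_schwartzMap (hf : PolynomiallyBounded f)
    (hfm : AEStronglyMeasurable f) (ψ : 𝓢(ℝ, ℝ)) (n : ℕ∞) : ContDiff ℝ n (ψ ⋆ f) := by
  refine contDiff_of_differentiable_iteratedDeriv fun k _ x => ?_
  rw [iteratedDeriv_convolution_schwartzMap hf hfm]
  exact (hasDerivAt_convolution_schwartzMap hf hfm _ x).differentiableAt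

theorem convolution_derivCLM (hf : ContDiff ℝ 1 f) (hf' : PolynomiallyBounded (deriv f))
    (ψ : 𝓢(ℝ, ℝ)) : derivCLM ℝ ℝ ψ ⋆ f = ψ ⋆ deriv f := by
  have hf_diff : Differentiable ℝ f := hf.differentiable one_ne_zero
  have hf_bdd : PolynomiallyBounded f := .of_deriv hf_diff hf'
  have hf'_cont : Continuous (deriv f) := hf.continuous_deriv le_rfl
  ext x
  have kernel_deriv (t : ℝ) :
      HasDerivAt (fun t => ψ (x - t)) (-derivCLM ℝ ℝ ψ (x - t)) t :=
    (ψ.hasDerivAt (x - t)).comp_const_sub x t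
  have by_parts := integral_bilinear_hasDerivAt_right_eq_neg_left_of_integrable
    (L := ContinuousLinearMap.lsmul ℝ ℝ) (fun t _ => kernel_deriv t)
    (fun t _ => (hf_diff t).hasDerivAt)
    (hf'.integrable_schwartzMap_sub_smul hf'_cont.aestronglyMeasurable ψ x)
    (by simpa using (hf_bdd.integrable_schwartzMap_sub_smul
      hf.continuous.aestronglyMeasurable (derivCLM ℝ ℝ ψ) x).neg)
    (hf_bdd.integrable_schwartzMap_sub_smul hf.continuous.aestronglyMeasurable ψ x)
  simpa [convolution_lsmul_swap, integral_neg] using by_parts.symm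

theorem convolution_iterate_derivCLM {n : ℕ} (hf : ContDiff ℝ n f)
    (hfn : PolynomiallyBounded (iteratedDeriv n f)) (ψ : 𝓢(ℝ, ℝ)) :
    (derivCLM ℝ ℝ)^[n] ψ ⋆ f = ψ ⋆ iteratedDeriv n f := by
  induction n generalizing f with
  | zero => simp
  | succ n ih =>
    have hf' : ContDiff ℝ (n + 1) f := mod_cast hf
    have hderiv : ContDiff ℝ n (deriv f) := (contDiff_succ_iff_deriv.1 hf').2.2
    rw [iteratedDeriv_succ'] at hfn ⊢
    rw [Function.iterate_succ_apply',
      convolution_derivCLM (hf'.of_le (by simp)) (.of_iteratedDeriv hderiv hfn), ih hderiv hfn]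

theorem coe_iterate_derivCLM (ψ : 𝓢(ℝ, E)) (n : ℕ) :
    ⇑((derivCLM ℝ E)^[n] ψ) = iteratedDeriv n ψ := by
  induction n with
  | zero => simp
  | succ n ih =>
    ext x
    rw [Function.iterate_succ_apply', derivCLM_apply, ih, iteratedDeriv_succ]

theorem integral_derivCLM (ψ : 𝓢(ℝ, E)) : ∫ x, derivCLM ℝ E ψ x = 0 :=
  integral_eq_zero_of_hasDerivAt_of_integrable ψ.hasDerivAt (derivCLM ℝ E ψ).integrable
    ψ.integrable

theorem norm_iteratedDeriv_convolution_schwartzMap_le [CompleteSpace E] {n : ℕ}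
    (hf : ContDiff ℝ n f) {K : ℝ≥0} (hlip : LipschitzWith K (iteratedDeriv n f)) (ψ : 𝓢(ℝ, ℝ))
    (m : ℕ) (x : ℝ) :
    ‖iteratedDeriv (n + (m + 1)) (ψ ⋆ f) x‖ ≤ K * ∫ u, |u * iteratedDeriv (m + 1) ψ u| := by
  have hfn : PolynomiallyBounded (iteratedDeriv n f) := .of_lipschitzWith hlip
  set θ : 𝓢(ℝ, ℝ) := (derivCLM ℝ ℝ)^[m + 1] ψ with hθ
  have moved : iteratedDeriv (n + (m + 1)) (ψ ⋆ f) = θ ⋆ iteratedDeriv n f := by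
    rw [iteratedDeriv_convolution_schwartzMap (.of_iteratedDeriv hf hfn)
      hf.continuous.aestronglyMeasurable, Function.iterate_add_apply,
      convolution_iterate_derivCLM hf hfn]
  have mean_zero : ∫ u, θ u = 0 := by
    rw [hθ, Function.iterate_succ_apply']
    exact integral_derivCLM _
  have moment_integrable : Integrable fun u => ‖u‖ * ‖θ u‖ := by
    simpa using θ.integrable_pow_mul volume 1
  have bound := norm_convolution_sub_integral_smul_le θ.integrable moment_integrable hlip x
  rw [mean_zero, zero_smul, sub_zero, ← moved] at bound
  simpa only [hθ, coe_iterate_derivCLM, norm_eq_abs, ← abs_mul] using bound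

theorem lipschitzWith_iteratedDeriv_comp_const_mul {n : ℕ} (hf : ContDiff ℝ n f) {K : ℝ≥0}
    (hlip : LipschitzWith K (iteratedDeriv n f)) (c : ℝ) :
    LipschitzWith (K * ‖c‖₊ ^ (n + 1)) (iteratedDeriv n fun x => f (c * x)) := by
  rw [iteratedDeriv_comp_const_smul hf]
  refine ((lipschitzWith_smul (c ^ n)).comp (hlip.comp (lipschitzWith_smul c))).weaken ?_
  rw [nnnorm_pow, pow_succ']
  exact le_of_eq (by ring)

theorem norm_iteratedDeriv_rescaled_convolution_schwartzMap_le [CompleteSpace E] {n : ℕ}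
    (hf : ContDiff ℝ n f) {K : ℝ≥0} (hlip : LipschitzWith K (iteratedDeriv n f)) (ψ : 𝓢(ℝ, ℝ))
    {σ : ℝ} (hσ : σ ≠ 0) (m : ℕ) (x : ℝ) :
    ‖iteratedDeriv (n + (m + 1)) (fun x' => (ψ ⋆ fun y => f (σ * y)) (σ⁻¹ * x')) x‖ ≤
      K * (∫ u, |u * iteratedDeriv (m + 1) ψ u|) * ‖σ‖⁻¹ ^ m := by
  have hg : ContDiff ℝ n fun y => f (σ * y) := hf.comp (contDiff_const.mul contDiff_id)
  have hg_lip := lipschitzWith_iteratedDeriv_comp_const_mul hf hlip σ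
  have hg_bdd : PolynomiallyBounded fun y => f (σ * y) :=
    .of_iteratedDeriv hg (.of_lipschitzWith hg_lip)
  rw [iteratedDeriv_comp_const_smul (contDiff_convolution_schwartzMap hg_bdd
    hg.continuous.aestronglyMeasurable ψ (n + (m + 1) : ℕ)), norm_smul, norm_pow, norm_inv]
  calc ‖σ‖⁻¹ ^ (n + (m + 1)) *
        ‖iteratedDeriv (n + (m + 1)) (ψ ⋆ fun y => f (σ * y)) (σ⁻¹ * x)‖
      ≤ ‖σ‖⁻¹ ^ (n + (m + 1)) *
        (↑(K * ‖σ‖₊ ^ (n + 1)) * ∫ u, |u * iteratedDeriv (m + 1) ψ u|) := by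
        gcongr
        exact norm_iteratedDeriv_convolution_schwartzMap_le hg hg_lip ψ m _
    _ = K * (∫ u, |u * iteratedDeriv (m + 1) ψ u|) * ‖σ‖⁻¹ ^ m := by
        have : ‖σ‖ ≠ 0 := norm_ne_zero_iff.2 hσ
        push_cast
        rw [show n + (m + 1) = (n + 1) + m by ring, pow_add, inv_pow _ (n + 1)]
        field_simp

end Convolution

section Gaussian

theorem abs_pow_mul_exp_neg_sq_div_two_le (n : ℕ) (x : ℝ) :
    |x| ^ n * exp (-(x ^ 2 / 2)) ≤ n.factorial * exp (1 / 2) := by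
  have pow_le : |x| ^ n ≤ n.factorial * exp |x| := by
    simpa only [div_le_iff₀' (Nat.cast_pos.2 n.factorial_pos : (0 : ℝ) < _)] using
      pow_div_factorial_le_exp |x| (abs_nonneg x) n
  calc |x| ^ n * exp (-(x ^ 2 / 2))
      ≤ n.factorial * exp |x| * exp (-(x ^ 2 / 2)) := by gcongr
    _ = n.factorial * exp (|x| - x ^ 2 / 2) := by rw [mul_assoc, ← exp_add, sub_eq_add_neg]
    _ ≤ n.factorial * exp (1 / 2) := by
      gcongr
      nlinarith [sq_nonneg (|x| - 1), sq_abs x]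

theorem exists_abs_eval_mul_exp_neg_sq_div_two_le (p : Polynomial ℝ) :
    ∃ C : ℝ, ∀ x, |p.eval x| * exp (-(x ^ 2 / 2)) ≤ C := by
  induction p using Polynomial.induction_on' with
  | add p q hp hq =>
    obtain ⟨C, hC⟩ := hp
    obtain ⟨D, hD⟩ := hq
    refine ⟨C + D, fun x => ?_⟩
    calc |(p + q).eval x| * exp (-(x ^ 2 / 2))
        ≤ (|p.eval x| + |q.eval x|) * exp (-(x ^ 2 / 2)) := by
          rw [Polynomial.eval_add]
          gcongr
          exact abs_add_le _ _
      _ ≤ C + D := by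
          rw [add_mul]
          exact add_le_add (hC x) (hD x)
  | monomial n a =>
    refine ⟨|a| * (n.factorial * exp (1 / 2)), fun x => ?_⟩
    rw [Polynomial.eval_monomial, abs_mul, abs_pow, mul_assoc]
    exact mul_le_mul_of_nonneg_left (abs_pow_mul_exp_neg_sq_div_two_le n x) (abs_nonneg a)

theorem iteratedDeriv_exp_neg_sq_div_two_div_sqrt (n : ℕ) (x : ℝ) :
    iteratedDeriv n (fun v => exp (-(v ^ 2) / 2) / √(2 * π)) x =
      (-1) ^ n * Polynomial.aeval x (Polynomial.hermite n) * exp (-(x ^ 2 / 2)) /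
        √(2 * π) := by
  simp only [neg_div]
  rw [iteratedDeriv_div_const, iteratedDeriv_eq_iterate,
    Polynomial.deriv_gaussian_eq_hermite_mul_gaussian]

/-- The standard normal density `φ` as a Schwartz function, so that it can serve as a convolution
kernel for functions of polynomial growth. -/
def stdGaussianDensity : 𝓢(ℝ, ℝ) where
  toFun v := exp (-(v ^ 2) / 2) / √(2 * π)
  smooth' := by fun_prop
  decay' k n := by
    obtain ⟨C, hC⟩ := exists_abs_eval_mul_exp_neg_sq_div_two_le
      (Polynomial.X ^ k * (Polynomial.hermite n).map (Int.castRingHom ℝ))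
    refine ⟨C / √(2 * π), fun x => ?_⟩
    rw [norm_iteratedFDeriv_eq_norm_iteratedDeriv, iteratedDeriv_exp_neg_sq_div_two_div_sqrt]
    calc _ = |(Polynomial.X ^ k * (Polynomial.hermite n).map (Int.castRingHom ℝ)).eval x| *
          exp (-(x ^ 2 / 2)) / √(2 * π) := by
          simp [Polynomial.eval_map, Polynomial.aeval_def, abs_mul, abs_of_nonneg, mul_assoc,
            mul_div_assoc]
      _ ≤ C / √(2 * π) := by
          gcongr
          exact hC x

theorem integral_comp_add_mul_stdGaussian [NormedSpace ℝ E] (f : ℝ → E) {σ : ℝ} (hσ : σ ≠ 0)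
    (x : ℝ) : ∫ y, f (x + σ * y) ∂_root_.stdGaussian =
      (stdGaussianDensity ⋆ fun y => f (σ * y)) (σ⁻¹ * x) := by
  have density_eq (y : ℝ) : gaussianPDFReal 0 1 y = stdGaussianDensity (-y) := by
    rw [show stdGaussianDensity (-y) = exp (-((-y) ^ 2) / 2) / √(2 * π) from rfl]
    simp [gaussianPDFReal, div_eq_inv_mul]
  rw [_root_.stdGaussian, integral_gaussianReal_eq_integral_smul one_ne_zero, convolution_lsmul,
    ← integral_neg_eq_self]
  simp only [density_eq, neg_neg]
  congr! 3
  field_simp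
  simp [sub_eq_add_neg]

theorem gaussian_smoothing_bound_general [NormedSpace ℝ E] [CompleteSpace E] {r : ℕ} (hr : 1 ≤ r)
    {f : ℝ → E} (hf : ContDiff ℝ (r - 1 : ℕ) f) {K : ℝ≥0}
    (hlip : LipschitzWith K (iteratedDeriv (r - 1) f)) {σ : ℝ} (hσ : 0 < σ) {k : ℕ}
    (hk : r ≤ k) :
    ContDiff ℝ (k : ℕ∞) (fun x => ∫ y, f (x + σ * y) ∂stdGaussian) ∧
    ∀ x : ℝ,
      ‖iteratedDeriv k (fun x' => ∫ y, f (x' + σ * y) ∂stdGaussian) x‖ ≤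
        K * (∫ u, |u * iteratedDeriv (k + 1 - r)
            (fun v => exp (-(v ^ 2) / 2) / √(2 * π)) u|) * σ ^ ((r : ℝ) - (k : ℝ)) := by
  obtain ⟨n, rfl⟩ := Nat.exists_eq_add_of_le' hr
  obtain ⟨m, rfl⟩ := Nat.exists_eq_add_of_le hk
  rw [Nat.add_sub_cancel] at hf hlip
  have hg : ContDiff ℝ n fun y => f (σ * y) := hf.comp (contDiff_const.mul contDiff_id)
  have hg_bdd : PolynomiallyBounded fun y => f (σ * y) := .of_iteratedDeriv hg
    (.of_lipschitzWith (lipschitzWith_iteratedDeriv_comp_const_mul hf hlip σ))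
  have rpow_eq : σ ^ (((n + 1 : ℕ) : ℝ) - ((n + 1 + m : ℕ) : ℝ)) = ‖σ‖⁻¹ ^ m := by
    rw [norm_of_nonneg hσ.le, inv_pow, ← rpow_natCast, ← rpow_neg hσ.le]
    congr 1
    push_cast
    ring
  simp only [integral_comp_add_mul_stdGaussian f hσ.ne']
  refine ⟨(contDiff_convolution_schwartzMap hg_bdd hg.continuous.aestronglyMeasurable _ _).comp
    (contDiff_const.mul contDiff_id), fun x => ?_⟩
  rw [rpow_eq, show n + 1 + m = n + (m + 1) by ring, show n + (m + 1) + 1 - (n + 1) = m + 1 by lia]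
  exact norm_iteratedDeriv_rescaled_convolution_schwartzMap_le hf hlip _ hσ.ne' m x

end Gaussian

end Smoothing

/-- Lemma 3.3: regularity of the Gaussian smoothing `f_σ(x) = E[f(x+σN)]`. -/
theorem gaussian_smoothing_bound (r : ℕ) (hr : 1 ≤ r) (f : ℝ → ℝ)
    (hf : ContDiff ℝ (r - 1 : ℕ) f) (hlip : LipschitzWith 1 (iteratedDeriv (r - 1) f))
    (σ : ℝ) (hσ : 0 < σ) (k : ℕ) (hk : r ≤ k) :
    ContDiff ℝ (k : ℕ∞) (fun x => ∫ y, f (x + σ * y) ∂stdGaussian) ∧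
    ∀ x : ℝ,
      |iteratedDeriv k (fun x' => ∫ y, f (x' + σ * y) ∂stdGaussian) x| ≤
        (∫ u, |u * iteratedDeriv (k + 1 - r)
            (fun v => Real.exp (-(v ^ 2) / 2) / Real.sqrt (2 * Real.pi)) u|) *
          σ ^ ((r : ℝ) - (k : ℝ)) := by
  simpa using gaussian_smoothing_bound_general hr hf hlip hσ hk
end
end

section
/- Let p > 1, let q = p/(p−1), let φ be an N-function with Fenchel–Legendre transform φ_*, and set C_φ = sup_{x,y>0} [ φ^{-1}(x) φ_*^{-1}(x) / x ] / [ φ^{-1}(y) φ_*^{-1}(y) / y ]. Then 1 ≤ C_φ ≤ 2, and: (1) if φ ≼ x^p, then φ_*(s)/s^q ≥ C_φ^{-q} · φ_*(t)/t^q for all s > t > 0; (2) if x^p ≼ φ, then φ_*(s)/s^q ≤ C_φ^{q} · φ_*(t)/t^q for all s > t > 0. -/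
open MeasureTheory ProbabilityTheory Real Filter

noncomputable section

open scoped ENNReal

/-!
The bounds on `C_φ` come from `x ≤ φ⁻¹(x) φ_*⁻¹(x) ≤ 2x`: the upper bound is Young's inequality, and
the lower one holds because `φ(y)/y ≥ x/φ⁻¹(x)` beyond `φ⁻¹(x)`, so that `φ_*(b) ≤ b φ⁻¹(x)` as long
as `b φ⁻¹(x) ≤ x`.

For the comparison with powers, fix `m ≥ 1` and dilate the dual variable by `l = m^(q-1)`, chosen so
that `m l = l^p = m^q`. Then `(m t)(l y) - φ(l y)` is `m^q (t y - φ(y))` with `l^p φ(y)` replaced by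
`φ(l y)`, and `φ ≼ x^p` or `x^p ≼ φ` says which of these two is larger. Taking suprema over `y`
compares `φ_*(m t)` with `m^q φ_*(t)`, so `φ_*(x)/x^q` is itself monotone and the factors `C_φ^{±q}`
only weaken this.
-/

section Development

open Set Topology

variable {φ ψ : ℝ → ℝ} {x y z s t a l m p q : ℝ}

lemma Dominates.mul_le_mul (h : Dominates ψ φ) (hx : 0 < x) (hxy : x ≤ y) (hψx : 0 < ψ x)
    (hψy : 0 < ψ y) : φ x * ψ y ≤ φ y * ψ x :=
  (div_le_div_iff₀ hψx hψy).1 (h hx (hx.trans_le hxy) hxy)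

lemma Dominates.monotoneOn_Ioi_of_id (hid : Dominates id φ) (hnonneg : ∀ x, 0 ≤ x → 0 ≤ φ x) :
    MonotoneOn φ (Ioi 0) := by
  intro x (hx : 0 < x) y (hy : 0 < y) hxy
  refine le_of_mul_le_mul_right ?_ hy
  calc φ x * y ≤ φ y * x := hid.mul_le_mul hx hxy hx hy
    _ ≤ φ y * y := mul_le_mul_of_nonneg_left hxy (hnonneg y hy.le)

lemma Dominates.apply_mul_le_rpow_mul (h : Dominates φ fun x => x ^ p) (hp : 0 ≤ p)
    (h0 : 0 ≤ φ 0) (hpos : ∀ x, 0 < x → 0 < φ x) (hl : 1 ≤ l) (hy : 0 ≤ y) :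
    φ (l * y) ≤ l ^ p * φ y := by
  rcases hy.eq_or_lt with rfl | hy
  · simpa only [mul_zero] using le_mul_of_one_le_left h0 (one_le_rpow hl hp)
  have hl0 : 0 < l := one_pos.trans_le hl
  refine le_of_mul_le_mul_left ?_ (rpow_pos_of_pos hy p)
  calc y ^ p * φ (l * y) ≤ (l * y) ^ p * φ y :=
        h.mul_le_mul hy (le_mul_of_one_le_left hy.le hl) (hpos y hy) (hpos _ (mul_pos hl0 hy))
    _ = y ^ p * (l ^ p * φ y) := by rw [mul_rpow hl0.le hy.le]; ring

lemma Dominates.rpow_mul_le_apply_mul (h : Dominates (fun x => x ^ p) φ) (hl : 1 ≤ l)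
    (hy : 0 < y) : l ^ p * φ y ≤ φ (l * y) := by
  have hl0 : 0 < l := one_pos.trans_le hl
  have hyp : 0 < y ^ p := rpow_pos_of_pos hy p
  refine le_of_mul_le_mul_right ?_ hyp
  calc l ^ p * φ y * y ^ p = φ y * (l * y) ^ p := by rw [mul_rpow hl0.le hy.le]; ring
    _ ≤ φ (l * y) * y ^ p :=
        h.mul_le_mul hy (le_mul_of_one_le_left hy.le hl) hyp (rpow_pos_of_pos (mul_pos hl0 hy) p)

-- Convexity on `[0, ∞)` allows `φ 0 > 0`, so secants are based at `e > 0` and `e → 0`.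
lemma IsNFunction.dominates_id (hφ : IsNFunction φ) : Dominates id φ := by
  obtain ⟨hconv, -, hzero, -, -⟩ := hφ
  have hid : Tendsto (fun e : ℝ => e) (𝓝[>] 0) (𝓝 0) := tendsto_id.mono_left nhdsWithin_le_nhds
  have hφ0 : Tendsto φ (𝓝[>] 0) (𝓝 0) := by
    have hprod := hzero.mul hid
    rw [mul_zero] at hprod
    refine hprod.congr' ?_
    filter_upwards [self_mem_nhdsWithin] with e he using div_mul_cancel₀ _ (ne_of_gt he)
  have hsecant (x : ℝ) (hx : 0 < x) :
      Tendsto (fun e => (φ x - φ e) / (x - e)) (𝓝[>] 0) (𝓝 (φ x / x)) := by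
    simpa only [sub_zero, Pi.div_def] using
      (tendsto_const_nhds.sub hφ0).div (tendsto_const_nhds.sub hid) (by simpa using hx.ne')
  intro x (hx : 0 < x) y (hy : 0 < y) hxy
  refine le_of_tendsto_of_tendsto (hsecant x hx) (hsecant y hy) ?_
  filter_upwards [self_mem_nhdsWithin, nhdsWithin_le_nhds (eventually_lt_nhds hx)]
    with e (he : 0 < e) hex
  exact hconv.secant_mono he.le hx.le hy.le hex.ne' (hex.trans_le hxy).ne' hxy

lemma bddAbove_image_mul_sub (hnonneg : ∀ x, 0 ≤ x → 0 ≤ φ x)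
    (htop : Tendsto (fun x => φ x / x) atTop atTop) (s : ℝ) :
    BddAbove ((fun y => s * y - φ y) '' Ici 0) := by
  obtain ⟨R, hR0, hR⟩ : ∃ R > 0, ∀ y ≥ R, s ≤ φ y / y := by
    obtain ⟨R, hR⟩ := eventually_atTop.1 (htop.eventually_ge_atTop s)
    exact ⟨max R 1, by positivity, fun y hy => hR y ((le_max_left R 1).trans hy)⟩
  refine ⟨|s| * R, ?_⟩
  rintro _ ⟨y, hy : 0 ≤ y, rfl⟩
  rcases le_total y R with hyR | hRy
  · calc s * y - φ y ≤ s * y := sub_le_self _ (hnonneg y hy)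
      _ ≤ |s| * R := mul_le_mul (le_abs_self s) hyR hy (abs_nonneg s)
  · calc s * y - φ y ≤ 0 := sub_nonpos.2 ((le_div_iff₀ (hR0.trans_le hRy)).1 (hR y hRy))
      _ ≤ |s| * R := by positivity

lemma mul_sub_le_fenchel (hnonneg : ∀ x, 0 ≤ x → 0 ≤ φ x)
    (htop : Tendsto (fun x => φ x / x) atTop atTop) (s : ℝ) (hy : 0 ≤ y) :
    s * y - φ y ≤ fenchel φ s :=
  le_csSup (bddAbove_image_mul_sub hnonneg htop s) ⟨y, hy, rfl⟩

lemma fenchel_le (h : ∀ y, 0 ≤ y → s * y - φ y ≤ a) : fenchel φ s ≤ a :=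
  csSup_le (nonempty_Ici.image _) (forall_mem_image.2 h)

lemma fenchel_nonneg (hnonneg : ∀ x, 0 ≤ x → 0 ≤ φ x) (hid : Dominates id φ)
    (htop : Tendsto (fun x => φ x / x) atTop atTop) (hs : 0 ≤ s) : 0 ≤ fenchel φ s := by
  have hlim : Tendsto (fun e : ℝ => -(φ 1 * e)) (𝓝[>] 0) (𝓝 0) := by
    refine Tendsto.mono_left ?_ nhdsWithin_le_nhds
    exact Continuous.tendsto' (by fun_prop) _ _ (by simp)
  refine le_of_tendsto hlim ?_
  filter_upwards [Ioc_mem_nhdsGT one_pos] with e ⟨he0, he1⟩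
  have hφe : φ e * 1 ≤ φ 1 * e := hid.mul_le_mul he0 he1 he0 one_pos
  have hyoung := mul_sub_le_fenchel hnonneg htop s he0.le
  linarith [mul_nonneg hs he0.le]

lemma ninv_nonneg (φ : ℝ → ℝ) (x : ℝ) : 0 ≤ ninv φ x :=
  Real.sInf_nonneg fun _ hz => hz.1

lemma ninv_le (hz : 0 ≤ z) (hx : x ≤ φ z) : ninv φ x ≤ z :=
  csInf_le ⟨0, fun _ hw => hw.1⟩ ⟨hz, hx⟩

lemma apply_lt_of_lt_ninv (hz : 0 ≤ z) (hlt : z < ninv φ x) : φ z < x :=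
  lt_of_not_ge fun hx => (ninv_le hz hx).not_gt hlt

lemma nonempty_superlevel (htop : Tendsto (fun x => φ x / x) atTop atTop) (x : ℝ) :
    {z : ℝ | 0 ≤ z ∧ x ≤ φ z}.Nonempty := by
  have hφtop : Tendsto φ atTop atTop := by
    refine (htop.atTop_mul_atTop₀ tendsto_id).congr' ?_
    filter_upwards [eventually_ne_atTop 0] with z hz using div_mul_cancel₀ _ hz
  exact ((eventually_ge_atTop 0).and (hφtop.eventually_ge_atTop x)).exists

lemma nonempty_superlevel_fenchel (hnonneg : ∀ x, 0 ≤ x → 0 ≤ φ x)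
    (htop : Tendsto (fun x => φ x / x) atTop atTop) (x : ℝ) :
    {z : ℝ | 0 ≤ z ∧ x ≤ fenchel φ z}.Nonempty := by
  have hφ1 := hnonneg 1 zero_le_one
  refine ⟨|x| + φ 1, by positivity, ?_⟩
  calc x ≤ |x| := le_abs_self x
    _ = (|x| + φ 1) * 1 - φ 1 := by ring
    _ ≤ fenchel φ (|x| + φ 1) := mul_sub_le_fenchel hnonneg htop _ zero_le_one

-- If `φ 0 > 0`, then `ninv φ x = 0` for all `x ≤ φ 0`.
lemma le_ninv (hnonneg : ∀ x, 0 ≤ x → 0 ≤ φ x) (hid : Dominates id φ)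
    (htop : Tendsto (fun x => φ x / x) atTop atTop) (ha : 0 < a) (hx0 : φ 0 < x) (hxa : φ a < x) :
    a ≤ ninv φ x := by
  refine le_csInf (nonempty_superlevel htop x) ?_
  rintro z ⟨hz, hxz⟩
  by_contra! hza
  rcases hz.eq_or_lt with rfl | hz
  · exact hxz.not_gt hx0
  · exact (hxz.trans (hid.monotoneOn_Ioi_of_id hnonneg hz ha hza.le)).not_gt hxa

lemma le_apply_of_ninv_lt (hnonneg : ∀ x, 0 ≤ x → 0 ≤ φ x) (hid : Dominates id φ)
    (htop : Tendsto (fun x => φ x / x) atTop atTop) (hpos : 0 < ninv φ x) (hy : ninv φ x < y) :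
    x ≤ φ y := by
  obtain ⟨z, ⟨hz, hxz⟩, hzy⟩ := exists_lt_of_csInf_lt (nonempty_superlevel htop x) hy
  have hz : 0 < z := hpos.trans_le (ninv_le hz hxz)
  exact hxz.trans (hid.monotoneOn_Ioi_of_id hnonneg hz (hz.trans hzy) hzy.le)

lemma mul_le_apply_mul_ninv (hnonneg : ∀ x, 0 ≤ x → 0 ≤ φ x) (hid : Dominates id φ)
    (htop : Tendsto (fun x => φ x / x) atTop atTop) (hx : 0 < x) (hpos : 0 < ninv φ x)
    (hy : ninv φ x < y) : x * y ≤ φ y * ninv φ x := by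
  have hy0 : 0 < y := hpos.trans hy
  have hxy : x ≤ φ y := le_apply_of_ninv_lt hnonneg hid htop hpos hy
  have hφy : 0 < φ y := hx.trans_le hxy
  rw [← div_le_iff₀' hφy]
  refine le_csInf (nonempty_superlevel htop x) ?_
  rintro z ⟨hz, hxz⟩
  rw [div_le_iff₀' hφy]
  rcases le_total y z with hyz | hzy
  · exact mul_le_mul hxy hyz hy0.le hφy.le
  · calc x * y ≤ φ z * y := mul_le_mul_of_nonneg_right hxz hy0.le
      _ ≤ φ y * z :=
        have hz : 0 < z := hpos.trans_le (ninv_le hz hxz)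
        hid.mul_le_mul hz hzy hz hy0

lemma fenchel_le_mul_ninv (hnonneg : ∀ x, 0 ≤ x → 0 ≤ φ x) (hid : Dominates id φ)
    (htop : Tendsto (fun x => φ x / x) atTop atTop) (hx : 0 < x) (hpos : 0 < ninv φ x)
    (hs : 0 ≤ s) (hsx : s * ninv φ x ≤ x) : fenchel φ s ≤ s * ninv φ x := by
  refine fenchel_le fun y hy => ?_
  rcases le_or_gt y (ninv φ x) with hle | hlt
  · calc s * y - φ y ≤ s * y := sub_le_self _ (hnonneg y hy)
      _ ≤ s * ninv φ x := mul_le_mul_of_nonneg_left hle hs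
  · have hsy : s * y ≤ φ y := by
      refine le_of_mul_le_mul_right ?_ hpos
      calc s * y * ninv φ x = s * ninv φ x * y := by ring
        _ ≤ x * y := mul_le_mul_of_nonneg_right hsx hy
        _ ≤ φ y * ninv φ x := mul_le_apply_mul_ninv hnonneg hid htop hx hpos hlt
    calc s * y - φ y ≤ 0 := sub_nonpos.2 hsy
      _ ≤ s * ninv φ x := mul_nonneg hs hpos.le

lemma ninv_mul_ninv_fenchel_le (hnonneg : ∀ x, 0 ≤ x → 0 ≤ φ x)
    (htop : Tendsto (fun x => φ x / x) atTop atTop) (hx : 0 ≤ x) :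
    ninv φ x * ninv (fenchel φ) x ≤ 2 * x := by
  refine mul_le_of_forall_lt_of_nonneg (ninv_nonneg φ x) (by positivity) ?_
  intro y hy hyx s hs hsx
  have hyoung := mul_sub_le_fenchel hnonneg htop s hy
  linarith [apply_lt_of_lt_ninv hy hyx, apply_lt_of_lt_ninv hs hsx]

lemma le_ninv_mul_ninv_fenchel (hnonneg : ∀ x, 0 ≤ x → 0 ≤ φ x) (hid : Dominates id φ)
    (htop : Tendsto (fun x => φ x / x) atTop atTop) (hx : 0 < x) (hpos : 0 < ninv φ x) :
    x ≤ ninv φ x * ninv (fenchel φ) x := by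
  rw [← div_le_iff₀' hpos]
  refine le_csInf (nonempty_superlevel_fenchel hnonneg htop x) ?_
  rintro s ⟨hs, hxs⟩
  rw [div_le_iff₀ hpos]
  by_contra! hsx
  exact (hxs.trans (fenchel_le_mul_ninv hnonneg hid htop hx hpos hs hsx.le)).not_gt hsx

lemma ninv_ratio_le_two (hnonneg : ∀ x, 0 ≤ x → 0 ≤ φ x) (hid : Dominates id φ)
    (htop : Tendsto (fun x => φ x / x) atTop atTop) (hx : 0 < x) (hy : 0 < y) :
    ninv φ x * ninv (fenchel φ) x / x / (ninv φ y * ninv (fenchel φ) y / y) ≤ 2 := by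
  -- `ninv φ y = 0` happens for `y ≤ φ 0`; the quotient is then `0`, being a division by `0`.
  rcases (ninv_nonneg φ y).eq_or_lt with hzero | hpos
  · simp [← hzero]
  have hden : 1 ≤ ninv φ y * ninv (fenchel φ) y / y :=
    (one_le_div hy).2 (le_ninv_mul_ninv_fenchel hnonneg hid htop hy hpos)
  have hnum : ninv φ x * ninv (fenchel φ) x / x ≤ 2 :=
    (div_le_iff₀ hx).2 (ninv_mul_ninv_fenchel_le hnonneg htop hx.le)
  rw [div_le_iff₀ (one_pos.trans_le hden)]
  linarith

lemma nratioConst_le_two (hnonneg : ∀ x, 0 ≤ x → 0 ≤ φ x) (hid : Dominates id φ)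
    (htop : Tendsto (fun x => φ x / x) atTop atTop) : nratioConst φ ≤ 2 := by
  refine csSup_le ⟨_, 1, one_pos, 1, one_pos, rfl⟩ ?_
  rintro _ ⟨x, hx, y, hy, rfl⟩
  exact ninv_ratio_le_two hnonneg hid htop hx hy

lemma one_le_nratioConst (hnonneg : ∀ x, 0 ≤ x → 0 ≤ φ x) (hid : Dominates id φ)
    (htop : Tendsto (fun x => φ x / x) atTop atTop) : 1 ≤ nratioConst φ := by
  obtain ⟨x, hx⟩ := exists_gt (max (φ 0) (φ 1))
  obtain ⟨hx0, hx1⟩ := max_lt_iff.1 hx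
  have hxpos : 0 < x := (hnonneg 0 le_rfl).trans_lt hx0
  have hinv : 0 < ninv φ x := one_pos.trans_le (le_ninv hnonneg hid htop one_pos hx0 hx1)
  have hprod : 0 < ninv φ x * ninv (fenchel φ) x / x :=
    div_pos (hxpos.trans_le (le_ninv_mul_ninv_fenchel hnonneg hid htop hxpos hinv)) hxpos
  refine le_csSup ⟨2, ?_⟩ ⟨x, hxpos, x, hxpos, (div_self hprod.ne').symm⟩
  rintro _ ⟨x, hx, y, hy, rfl⟩
  exact ninv_ratio_le_two hnonneg hid htop hx hy

lemma rpow_sub_one_rpow_conj (hpq : p.HolderConjugate q) (hm : 0 ≤ m) :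
    (m ^ (q - 1)) ^ p = m ^ q := by
  rw [← rpow_mul hm, hpq.symm.sub_one_mul_conj]

lemma mul_mul_rpow_sub_one_mul (hm : 0 < m) (q t y : ℝ) :
    m * t * (m ^ (q - 1) * y) = m ^ q * (t * y) := by
  rw [rpow_sub_one hm.ne']
  field_simp

lemma rpow_mul_fenchel_le (hpq : p.HolderConjugate q) (hnonneg : ∀ x, 0 ≤ x → 0 ≤ φ x)
    (hpos : ∀ x, 0 < x → 0 < φ x) (htop : Tendsto (fun x => φ x / x) atTop atTop)
    (hdom : Dominates φ fun x => x ^ p) (hm : 1 ≤ m) (t : ℝ) :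
    m ^ q * fenchel φ t ≤ fenchel φ (m * t) := by
  have hm0 : 0 < m := one_pos.trans_le hm
  have hl : 1 ≤ m ^ (q - 1) := one_le_rpow hm hpq.symm.sub_one_pos.le
  rw [← le_div_iff₀' (rpow_pos_of_pos hm0 q)]
  refine fenchel_le fun y hy => ?_
  rw [le_div_iff₀' (rpow_pos_of_pos hm0 q)]
  have hdil : φ (m ^ (q - 1) * y) ≤ m ^ q * φ y := by
    rw [← rpow_sub_one_rpow_conj hpq hm0.le]
    exact hdom.apply_mul_le_rpow_mul hpq.nonneg (hnonneg 0 le_rfl) hpos hl hy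
  calc m ^ q * (t * y - φ y) = m * t * (m ^ (q - 1) * y) - m ^ q * φ y := by
        rw [mul_mul_rpow_sub_one_mul hm0, mul_sub]
    _ ≤ m * t * (m ^ (q - 1) * y) - φ (m ^ (q - 1) * y) := sub_le_sub_left hdil _
    _ ≤ fenchel φ (m * t) := mul_sub_le_fenchel hnonneg htop _ (by positivity)

lemma fenchel_mul_le_rpow_mul (hpq : p.HolderConjugate q) (hnonneg : ∀ x, 0 ≤ x → 0 ≤ φ x)
    (htop : Tendsto (fun x => φ x / x) atTop atTop) (hdom : Dominates (fun x => x ^ p) φ)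
    (hm : 1 ≤ m) (ht : 0 ≤ fenchel φ t) : fenchel φ (m * t) ≤ m ^ q * fenchel φ t := by
  have hm0 : 0 < m := one_pos.trans_le hm
  have hl : 1 ≤ m ^ (q - 1) := one_le_rpow hm hpq.symm.sub_one_pos.le
  have hl0 : 0 < m ^ (q - 1) := one_pos.trans_le hl
  refine fenchel_le fun w hw => ?_
  rcases hw.eq_or_lt with rfl | hw
  · have hφ0 := hnonneg 0 le_rfl
    have hrhs : 0 ≤ m ^ q * fenchel φ t := by positivity
    linarith
  obtain ⟨y, hy, rfl⟩ : ∃ y, 0 < y ∧ m ^ (q - 1) * y = w :=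
    ⟨w / m ^ (q - 1), div_pos hw hl0, mul_div_cancel₀ _ hl0.ne'⟩
  have hdil : m ^ q * φ y ≤ φ (m ^ (q - 1) * y) := by
    rw [← rpow_sub_one_rpow_conj hpq hm0.le]
    exact hdom.rpow_mul_le_apply_mul hl hy
  calc m * t * (m ^ (q - 1) * y) - φ (m ^ (q - 1) * y)
      ≤ m * t * (m ^ (q - 1) * y) - m ^ q * φ y := sub_le_sub_left hdil _
    _ = m ^ q * (t * y - φ y) := by rw [mul_mul_rpow_sub_one_mul hm0, mul_sub]
    _ ≤ m ^ q * fenchel φ t :=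
        mul_le_mul_of_nonneg_left (mul_sub_le_fenchel hnonneg htop t hy.le) (by positivity)

lemma Dominates.rpow_fenchel (hpq : p.HolderConjugate q) (hnonneg : ∀ x, 0 ≤ x → 0 ≤ φ x)
    (hpos : ∀ x, 0 < x → 0 < φ x) (htop : Tendsto (fun x => φ x / x) atTop atTop)
    (hdom : Dominates φ fun x => x ^ p) : Dominates (fun x => x ^ q) (fenchel φ) := by
  intro t (ht : 0 < t) s (hs : 0 < s) hts
  have hscale := rpow_mul_fenchel_le hpq hnonneg hpos htop hdom ((one_le_div ht).2 hts) t
  rw [div_mul_cancel₀ _ ht.ne', div_rpow hs.le ht.le] at hscale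
  rw [le_div_iff₀ (rpow_pos_of_pos hs q)]
  exact (div_mul_comm _ _ _).trans_le hscale

lemma Dominates.antitoneOn_fenchel_div_rpow (hpq : p.HolderConjugate q)
    (hnonneg : ∀ x, 0 ≤ x → 0 ≤ φ x) (hid : Dominates id φ)
    (htop : Tendsto (fun x => φ x / x) atTop atTop) (hdom : Dominates (fun x => x ^ p) φ) :
    AntitoneOn (fun x => fenchel φ x / x ^ q) (Ioi 0) := by
  intro t (ht : 0 < t) s (hs : 0 < s) hts
  have hscale := fenchel_mul_le_rpow_mul hpq hnonneg htop hdom ((one_le_div ht).2 hts)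
    (fenchel_nonneg hnonneg hid htop ht.le)
  rw [div_mul_cancel₀ _ ht.ne', div_rpow hs.le ht.le] at hscale
  rw [div_le_iff₀ (rpow_pos_of_pos hs q)]
  exact hscale.trans_eq (div_mul_comm _ _ _)

theorem fenchel_power_comparison_general (hpq : p.HolderConjugate q) (h0 : 0 ≤ φ 0)
    (hpos : ∀ x, 0 < x → 0 < φ x) (hid : Dominates id φ)
    (htop : Tendsto (fun x => φ x / x) atTop atTop) :
    1 ≤ nratioConst φ ∧ nratioConst φ ≤ 2 ∧
    (Dominates φ (fun x => x ^ p) → MonotoneOn (fun x => fenchel φ x / x ^ q) (Ioi 0)) ∧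
    (Dominates (fun x => x ^ p) φ → AntitoneOn (fun x => fenchel φ x / x ^ q) (Ioi 0)) := by
  have hnonneg (x : ℝ) (hx : 0 ≤ x) : 0 ≤ φ x := by
    rcases hx.eq_or_lt with rfl | hx
    exacts [h0, (hpos x hx).le]
  exact ⟨one_le_nratioConst hnonneg hid htop, nratioConst_le_two hnonneg hid htop,
    Dominates.rpow_fenchel hpq hnonneg hpos htop,
    Dominates.antitoneOn_fenchel_div_rpow hpq hnonneg hid htop⟩

end Development

/-- Lemma 4.6: comparison of the Fenchel–Legendre transform `φ_*` with power functions. -/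
theorem fenchel_power_comparison (p : ℝ) (hp : 1 < p) (q : ℝ) (hq : q = p / (p - 1))
    (φ : ℝ → ℝ) (hφ : IsNFunction φ) :
    1 ≤ nratioConst φ ∧ nratioConst φ ≤ 2 ∧
    (Dominates φ (fun x => x ^ p) →
      ∀ s t : ℝ, 0 < t → t < s →
        nratioConst φ ^ (-q) * (fenchel φ t / t ^ q) ≤ fenchel φ s / s ^ q) ∧
    (Dominates (fun x => x ^ p) φ →
      ∀ s t : ℝ, 0 < t → t < s →
        fenchel φ s / s ^ q ≤ nratioConst φ ^ q * (fenchel φ t / t ^ q)) := by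
  have hid : Dominates id φ := hφ.dominates_id
  obtain ⟨-, hnonneg, -, htop, hpos⟩ := hφ
  have hpq : p.HolderConjugate q := (holderConjugate_iff_eq_conjExponent hp).2 hq
  obtain ⟨hC, hC2, hmono, hanti⟩ :=
    fenchel_power_comparison_general hpq (hnonneg 0 le_rfl) hpos hid htop
  have hratio (t : ℝ) (ht : 0 < t) : 0 ≤ fenchel φ t / t ^ q :=
    div_nonneg (fenchel_nonneg hnonneg hid htop ht.le) (rpow_nonneg ht.le q)
  refine ⟨hC, hC2, fun hdom s t ht hts => ?_, fun hdom s t ht hts => ?_⟩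
  · exact (mul_le_of_le_one_left (hratio t ht)
      (rpow_le_one_of_one_le_of_nonpos hC (neg_nonpos.2 hpq.symm.nonneg))).trans
      (hmono hdom ht (ht.trans hts) hts.le)
  · exact (hanti hdom ht (ht.trans hts) hts.le).trans
      (le_mul_of_one_le_left (hratio t ht) (one_le_rpow hC hpq.symm.nonneg))
end
end
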